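/- (Jiang's uniform bounds on the specific volume.) For all positive constants μ, κ, R, c_v and all M, m > 0 there exists a constant C₁ > 0, depending only on μ, κ, R, c_v, M, m, such that: whenever (v,u,θ) is a classical solution of the one-dimensional compressible Navier–Stokes system on ℝ whose initial data are (M,m)-bounded, then C₁⁻¹ ≤ v(x,t) ≤ C₁ for all (x,t) ∈ ℝ × [0,∞). -/

import Mathlib

/-!
Why the specific volume stays between two positive constants. Three ingredients are combined; every
constant depends only on the coefficients and on `M`, `m`, never on the solution, the time or the
place.

*Energy.* The relative entropy `η = u² / 2 + R (v - log v - 1) + cv (θ - log θ - 1)` satisfies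
`η_t + D = (flux)_x` with the dissipation `D = μ u_x² / (v θ) + κ θ_x² / (v θ²)`. Hence the integral
of `η(·, t)` over any interval plus the space-time integral of `D` is at most `E0`
(`NSFlow.energy`). The flux vanishes at infinity because, on each `[0, T]`, `v` and `θ` are bounded
away from `0` on the whole line (`NSFlow.v_lower`, `NSFlow.θ_lower`): their far-field limits are
uniform in `t ≤ T`, since time derivatives are controlled by a time-integrable function.

*Representation.* The momentum equation reads `u_t = σ_x` with `σ = μ u_x / v - R θ / v`, and
`u_x / v = (log v)_t`. Integrating it in space against a cut-off supported in `[a, a + 2]`, and in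
time, expresses `v(x, t)` for `x ∈ [a, a + 1]` through the propagator `Z(s, t)`, the exponential of
`μ⁻¹` times the integral of `σ` over `[a + 1, a + 2] × [s, t]`: up to bounded factors,
`v(x, t) ≈ Z(0, t) + ∫₀ᵗ Z(s, t) θ(x, s) ds` (`exists_repr`).

*Windows.* Let `d(s)` be the integral of `D(·, s)` over a unit interval. The entropy bound and
Cauchy-Schwarz give there (`exists_window`) `∫ θ ≤ α`, `k ≤ ∫ v`, `k exp (-d / 2κ) ≤ θ`,
`θ ≤ 2α + (sup v) α d / κ` and `∫ σ ≤ A d - c` with `c > 0`. As `∫ d ds ≤ E0`, the last bound makes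
`Z(s, t)` decay exponentially in `t - s` (`NSFlow.exists_decay`).

The upper bound follows by Gronwall's inequality with the integrable kernel `d`
(`NSFlow.exists_upper`). For the lower bound, averaging the representation over the window and using
`k ≤ ∫ v`, `∫ θ ≤ α` shows that `Z(0, t) + ∫₀ᵗ Z(s, t) ds` is bounded below; since `θ` is bounded
below at all times where `d` is not large, so is `v` (`NSFlow.exists_lower`).
-/

open MeasureTheory Filter Set

noncomputable section

/-- Partial derivative in the spatial variable. -/
def pdx (f : ℝ → ℝ → ℝ) (x t : ℝ) : ℝ := deriv (fun y => f y t) x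

/-- Partial derivative in the time variable. -/
def pdt (f : ℝ → ℝ → ℝ) (x t : ℝ) : ℝ := deriv (fun s => f x s) t

/-- The `L²(ℝ)` norm, valued in `ℝ≥0∞`. -/
def L2 (f : ℝ → ℝ) : ENNReal := eLpNorm f 2 volume

/-- The `H¹(ℝ)` norm, valued in `ℝ≥0∞`. -/
def H1 (f : ℝ → ℝ) : ENNReal := L2 f + L2 (deriv f)

/-- The `H²(ℝ)` norm, valued in `ℝ≥0∞`. -/
def H2 (f : ℝ → ℝ) : ENNReal := L2 f + L2 (deriv f) + L2 (deriv (deriv f))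

/-- A classical solution of the 1-D compressible Navier–Stokes system in Lagrangian
coordinates on `ℝ`, together with the regularity and far-field conditions. -/
structure IsClassicalSolution (μ κ R cv : ℝ) (v u θ : ℝ → ℝ → ℝ) : Prop where
  v_pos : ∀ x t : ℝ, 0 ≤ t → 0 < v x t
  θ_pos : ∀ x t : ℝ, 0 ≤ t → 0 < θ x t
  smooth_x_v : ∀ t : ℝ, 0 ≤ t → ContDiff ℝ 2 (fun x => v x t)
  smooth_x_u : ∀ t : ℝ, 0 ≤ t → ContDiff ℝ 2 (fun x => u x t)
  smooth_x_θ : ∀ t : ℝ, 0 ≤ t → ContDiff ℝ 2 (fun x => θ x t)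
  smooth_t_v : ∀ x t : ℝ, 0 ≤ t → DifferentiableAt ℝ (fun s => v x s) t
  smooth_t_u : ∀ x t : ℝ, 0 ≤ t → DifferentiableAt ℝ (fun s => u x s) t
  smooth_t_θ : ∀ x t : ℝ, 0 ≤ t → DifferentiableAt ℝ (fun s => θ x s) t
  eq_mass : ∀ x t : ℝ, 0 ≤ t → pdt v x t = pdx u x t
  eq_momentum : ∀ x t : ℝ, 0 ≤ t →
    pdt u x t + pdx (fun y s => R * θ y s / v y s) x t
      = μ * pdx (fun y s => pdx u y s / v y s) x t
  eq_energy : ∀ x t : ℝ, 0 ≤ t →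
    cv * pdt θ x t + (R * θ x t / v x t) * pdx u x t
      = κ * pdx (fun y s => pdx θ y s / v y s) x t + μ * (pdx u x t) ^ 2 / v x t
  reg_H1 : ∀ T : ℝ, 0 ≤ T → ∃ B : ℝ, ∀ t ∈ Icc (0 : ℝ) T,
    H1 (fun x => v x t - 1) + H1 (fun x => u x t) + H1 (fun x => θ x t - 1)
      ≤ ENNReal.ofReal B
  reg_H2 : ∀ T : ℝ, 0 < T →
    (∫⁻ t in Icc (0 : ℝ) T,
      (H2 (fun x => u x t) ^ 2 + H2 (fun x => θ x t - 1) ^ 2)) < ⊤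
  farfield_v : ∀ t : ℝ, 0 ≤ t → Tendsto (fun x => v x t) (cocompact ℝ) (nhds 1)
  farfield_u : ∀ t : ℝ, 0 ≤ t → Tendsto (fun x => u x t) (cocompact ℝ) (nhds 0)
  farfield_θ : ∀ t : ℝ, 0 ≤ t → Tendsto (fun x => θ x t) (cocompact ℝ) (nhds 1)

/-- The initial data of `(v, u, θ)` are `(M, m)`-bounded. -/
def InitBounded (M m : ℝ) (v u θ : ℝ → ℝ → ℝ) : Prop :=
  H1 (fun x => v x 0 - 1) + H1 (fun x => u x 0) + H1 (fun x => θ x 0 - 1)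
      ≤ ENNReal.ofReal M
    ∧ (∀ x : ℝ, m ≤ v x 0) ∧ (∀ x : ℝ, m ≤ θ x 0)

/-- The solution is `K`-volume-bounded. -/
def VolBounded (K : ℝ) (v : ℝ → ℝ → ℝ) : Prop :=
  ∀ x t : ℝ, 0 ≤ t → K⁻¹ ≤ v x t ∧ v x t ≤ K

end

open scoped Topology

/-! ### Interval integrals and one-dimensional Sobolev estimates -/

/-- `∫ₐᵇ f² ≤ B` on every bounded interval: the form in which `L²(ℝ)` bounds of continuous
functions are used below. -/
def L2le (f : ℝ → ℝ) (B : ℝ) : Prop := ∀ a b : ℝ, a ≤ b → ∫ y in a..b, f y ^ 2 ≤ B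

lemma integral_sub_interval_le {f : ℝ → ℝ} (hf : Continuous f) (h0 : ∀ x, 0 ≤ f x)
    {a b c d : ℝ} (hca : c ≤ a) (hab : a ≤ b) (hbd : b ≤ d) :
    ∫ y in a..b, f y ≤ ∫ y in c..d, f y :=
  intervalIntegral.integral_mono_interval hca hab hbd
    (Eventually.of_forall h0) (hf.intervalIntegrable _ _)

lemma integral_le_of_continuous {f g : ℝ → ℝ} (hf : Continuous f) (hg : Continuous g)
    {a b : ℝ} (hab : a ≤ b) (h : ∀ x ∈ Icc a b, f x ≤ g x) :
    ∫ y in a..b, f y ≤ ∫ y in a..b, g y :=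
  intervalIntegral.integral_mono_on hab (hf.intervalIntegrable _ _) (hg.intervalIntegrable _ _) h

/-- If every value of `f` on a unit interval dominates `c`, so does the mean. -/
lemma le_integral_unit {f : ℝ → ℝ} (hf : Continuous f) {a c : ℝ}
    (h : ∀ x ∈ Icc a (a + 1), c ≤ f x) : c ≤ ∫ y in a..(a + 1), f y := by
  have := integral_le_of_continuous (continuous_const (y := c)) hf (by linarith : a ≤ a + 1) h
  simpa using this

lemma integral_unit_le {f : ℝ → ℝ} (hf : Continuous f) {a c : ℝ}
    (h : ∀ x ∈ Icc a (a + 1), f x ≤ c) : ∫ y in a..(a + 1), f y ≤ c := by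
  have := integral_le_of_continuous hf (continuous_const (y := c)) (by linarith : a ≤ a + 1) h
  simpa using this

/-- A continuous function varies on an interval by at most the integral of `|f'|`. -/
lemma abs_sub_le_integral_abs_deriv {f f' : ℝ → ℝ} (hf : ∀ x, HasDerivAt f (f' x) x)
    (hc : Continuous f') {a b x y : ℝ} (hx : x ∈ Icc a b) (hy : y ∈ Icc a b) :
    |f y - f x| ≤ ∫ z in a..b, |f' z| := by
  have h1 : ∀ x y, a ≤ x → x ≤ y → y ≤ b → |f y - f x| ≤ ∫ z in a..b, |f' z| := by
    intro x y hax hxy hyb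
    rw [← intervalIntegral.integral_eq_sub_of_hasDerivAt (fun z _ => hf z)
      (hc.intervalIntegrable x y)]
    refine (intervalIntegral.abs_integral_le_integral_abs hxy).trans ?_
    exact integral_sub_interval_le hc.abs (fun _ => abs_nonneg _) hax hxy hyb
  rcases le_total x y with h | h
  · exact h1 x y hx.1 h hy.2
  · rw [abs_sub_comm]; exact h1 y x hy.1 h hx.2

/-- One-dimensional Sobolev inequality on a unit interval. -/
lemma sq_le_sobolev {f f' : ℝ → ℝ} (hf : ∀ x, HasDerivAt f (f' x) x)
    (hc : Continuous f') (x : ℝ) :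
    f x ^ 2 ≤ 2 * (∫ y in x..(x + 1), f y ^ 2) + ∫ y in x..(x + 1), f' y ^ 2 := by
  have hfc : Continuous f := continuous_iff_continuousAt.2 fun x => (hf x).continuousAt
  have h1 : ∀ y ∈ Icc x (x + 1), f x ^ 2 - ((∫ y in x..(x + 1), f y ^ 2)
      + ∫ y in x..(x + 1), f' y ^ 2) ≤ f y ^ 2 := by
    intro y hy
    have hd : ∀ x, HasDerivAt (fun x => f x ^ 2) (2 * f x * f' x) x := by
      intro x
      have := (hf x).fun_pow 2
      simpa using this
    have hb := abs_sub_le_integral_abs_deriv hd (by fun_prop) (left_mem_Icc.2 (by linarith)) hy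
    have h2 : ∫ z in x..(x + 1), |2 * f z * f' z| ≤ ∫ z in x..(x + 1), (f z ^ 2 + f' z ^ 2) := by
      refine integral_le_of_continuous (by fun_prop) (by fun_prop) (by linarith) ?_
      intro z _
      rw [abs_le]
      constructor <;> nlinarith [sq_nonneg (f z - f' z), sq_nonneg (f z + f' z)]
    rw [intervalIntegral.integral_add ((hfc.fun_pow 2).intervalIntegrable _ _)
      ((hc.fun_pow 2).intervalIntegrable _ _)] at h2
    have := (abs_le.1 hb).1
    linarith
  have := le_integral_unit (hfc.fun_pow 2) h1
  linarith

lemma L2le.sup {f f' : ℝ → ℝ} {B B' : ℝ} (hB : L2le f B) (hB' : L2le f' B')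
    (hf : ∀ x, HasDerivAt f (f' x) x) (hc : Continuous f') (x : ℝ) : f x ^ 2 ≤ 2 * B + B' := by
  have := sq_le_sobolev hf hc x
  have := hB x (x + 1) (by linarith)
  have := hB' x (x + 1) (by linarith)
  linarith

/-- Equicontinuity coming from an `L²` bound on the derivative. -/
lemma L2le.osc {f f' : ℝ → ℝ} {B l : ℝ} (hB : L2le f' B)
    (hf : ∀ x, HasDerivAt f (f' x) x) (hc : Continuous f') (hl : 0 < l) (x y : ℝ) :
    |f y - f x| ≤ (l * B + |y - x| / l) / 2 := by
  have key : ∀ x y, x ≤ y → |f y - f x| ≤ (l * B + |y - x| / l) / 2 := by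
    intro x y hxy
    have h1 := abs_sub_le_integral_abs_deriv hf hc (left_mem_Icc.2 hxy) (right_mem_Icc.2 hxy)
    have h2 : ∫ z in x..y, |f' z| ≤ ∫ z in x..y, (l / 2 * f' z ^ 2 + 1 / (2 * l)) := by
      refine integral_le_of_continuous (by fun_prop) (by fun_prop) hxy ?_
      intro z _
      have : l / 2 * f' z ^ 2 + 1 / (2 * l) - |f' z| = (l * |f' z| - 1) ^ 2 / (2 * l) := by
        rw [← sq_abs (f' z)]; field_simp; ring
      have : 0 ≤ (l * |f' z| - 1) ^ 2 / (2 * l) := by positivity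
      linarith
    rw [intervalIntegral.integral_add ((continuous_const.fun_mul (hc.fun_pow 2)).intervalIntegrable _ _)
      (continuous_const.intervalIntegrable _ _), intervalIntegral.integral_const_mul,
      intervalIntegral.integral_const] at h2
    have h3 := mul_le_mul_of_nonneg_left (hB x y hxy) hl.le
    rw [abs_of_nonneg (sub_nonneg.2 hxy)]
    have h4 : (y - x) • (1 / (2 * l)) = (y - x) / l / 2 := by
      rw [smul_eq_mul]; field_simp
    rw [h4] at h2
    linarith
  rcases le_total x y with h | h
  · exact key x y h
  · rw [abs_sub_comm, abs_sub_comm y x]; exact key y x h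

/-- A function that is continuous in time for each `x` and spatially equicontinuous through an
`L²` bound on its derivative is jointly continuous. -/
lemma continuous_uncurry_of_L2le {f f' : ℝ → ℝ → ℝ}
    (hf : ∀ x t, HasDerivAt (fun y => f y t) (f' x t) x)
    (hc : ∀ t, Continuous fun y => f' y t) (ht : ∀ x, Continuous (f x))
    (hB : ∀ T, ∃ B, ∀ t ≤ T, L2le (fun y => f' y t) B) :
    Continuous (fun p : ℝ × ℝ => f p.1 p.2) := by
  rw [continuous_iff_continuousAt]
  rintro ⟨x, t⟩
  rw [ContinuousAt, Metric.tendsto_nhds]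
  intro ε hε
  obtain ⟨B, hB⟩ := hB (t + 1)
  have hB0 : 0 ≤ B := by
    have := hB t (by linarith) 0 0 le_rfl
    simpa using this
  set l := ε / (2 * (B + 1)) with hl
  have hl0 : 0 < l := by positivity
  have hlB : l * B ≤ ε / 2 := by
    rw [hl, div_mul_eq_mul_div, div_le_div_iff₀ (by positivity) (by norm_num)]
    nlinarith
  have e1 : ∀ᶠ p : ℝ × ℝ in 𝓝 (x, t), |f x p.2 - f x t| < ε / 2 := by
    have : Tendsto (fun p : ℝ × ℝ => f x p.2) (𝓝 (x, t)) (𝓝 (f x t)) :=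
      ((ht x).comp continuous_snd).tendsto (x, t)
    exact (Metric.tendsto_nhds.1 this) (ε / 2) (by positivity)
  have e2 : ∀ᶠ p : ℝ × ℝ in 𝓝 (x, t), p.2 < t + 1 :=
    (continuous_snd.tendsto (x, t)).eventually (gt_mem_nhds (by simp))
  have e3 : ∀ᶠ p : ℝ × ℝ in 𝓝 (x, t), |p.1 - x| < l * ε / 2 :=
    (Metric.tendsto_nhds.1 (continuous_fst.tendsto (x, t))) (l * ε / 2) (by positivity)
  filter_upwards [e1, e2, e3] with p h1 h2 h3
  have := (hB p.2 h2.le).osc (fun z => hf z p.2) (hc p.2) hl0 x p.1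
  have h4 : |p.1 - x| / l < ε / 2 := by
    rw [div_lt_iff₀ hl0]; linarith
  rw [Real.dist_eq]
  have := abs_sub_le (f p.1 p.2) (f x p.2) (f x t)
  linarith

/-- Integrability on rectangles from a time-integrable bound of the spatial `L¹` norms. -/
lemma integrable_rect {g : ℝ → ℝ → ℝ} {q : ℝ → ℝ} {a b s t : ℝ} (hab : a ≤ b) (hst : s ≤ t)
    (hm : Measurable fun p : ℝ × ℝ => g p.1 p.2)
    (hc : ∀ᵐ τ, τ ∈ Ioc s t → Continuous fun x => g x τ)
    (hq : IntervalIntegrable q volume s t)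
    (hb : ∀ᵐ τ, τ ∈ Ioc s t → ∫ x in a..b, |g x τ| ≤ q τ) :
    Integrable (Function.uncurry g)
      ((volume.restrict (Ioc a b)).prod (volume.restrict (Ioc s t))) := by
  refine (integrable_prod_iff' hm.aestronglyMeasurable).2 ⟨?_, ?_⟩
  · rw [ae_restrict_iff' measurableSet_Ioc]
    filter_upwards [hc] with τ h1 hτ
    exact ((intervalIntegrable_iff_integrableOn_Ioc_of_le hab).1
      ((h1 hτ).intervalIntegrable a b))
  · have hq' := (intervalIntegrable_iff_integrableOn_Ioc_of_le hst).1 hq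
    have hm' : Measurable fun p : ℝ × ℝ => ‖g p.2 p.1‖ := (hm.comp measurable_swap).norm
    refine Integrable.mono' hq' ?_ ?_
    · exact (hm'.stronglyMeasurable.integral_prod_right').aestronglyMeasurable
    · rw [ae_restrict_iff' measurableSet_Ioc]
      filter_upwards [hb] with τ h1 hτ
      rw [Real.norm_of_nonneg (integral_nonneg fun _ => norm_nonneg _)]
      have := h1 hτ
      rw [intervalIntegral.integral_of_le hab] at this
      exact this

/-- Space-time fundamental theorem of calculus: integrating `∂ₜ f = g` over a rectangle. For
almost every `x` the time derivative is integrable, which suffices for the fundamental theorem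
because `f` is differentiable at every positive time. -/
lemma rect_ftc {f g : ℝ → ℝ → ℝ} {q : ℝ → ℝ} {a b s t : ℝ} (hab : a ≤ b) (hs : 0 ≤ s)
    (hst : s ≤ t)
    (hft : ∀ x, Continuous (f x)) (hfx : ∀ τ, Continuous fun x => f x τ)
    (hd : ∀ x τ, 0 < τ → HasDerivAt (f x) (g x τ) τ)
    (hm : Measurable fun p : ℝ × ℝ => g p.1 p.2)
    (hc : ∀ τ, Continuous fun x => g x τ)
    (hq : IntervalIntegrable q volume s t)
    (hb : ∀ᵐ τ, τ ∈ Ioc s t → ∫ x in a..b, |g x τ| ≤ q τ) :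
    IntervalIntegrable (fun τ => ∫ x in a..b, g x τ) volume s t ∧
    (∫ x in a..b, f x t) - (∫ x in a..b, f x s) = ∫ τ in s..t, ∫ x in a..b, g x τ := by
  have hI := integrable_rect hab hst hm (Eventually.of_forall fun τ _ => hc τ) hq hb
  constructor
  · rw [intervalIntegrable_iff_integrableOn_Ioc_of_le hst]
    have := hI.integral_prod_right
    simp only [intervalIntegral.integral_of_le hab]
    exact this
  · rw [← intervalIntegral.integral_sub ((hfx t).intervalIntegrable _ _)
      ((hfx s).intervalIntegrable _ _)]
    have h1 : ∫ x in a..b, (f x t - f x s) = ∫ x in a..b, ∫ τ in s..t, g x τ := by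
      rw [intervalIntegral.integral_of_le hab, intervalIntegral.integral_of_le hab]
      refine integral_congr_ae ?_
      filter_upwards [hI.prod_right_ae] with x hx
      refine (intervalIntegral.integral_eq_sub_of_hasDerivAt_of_le hst (hft x).continuousOn
        (fun τ hτ => hd x τ (lt_of_le_of_lt hs hτ.1)) ?_).symm
      exact (intervalIntegrable_iff_integrableOn_Ioc_of_le hst).2 hx
    rw [h1]
    simp only [intervalIntegral.integral_of_le hab, intervalIntegral.integral_of_le hst]
    exact integral_integral_swap hI

/-! ### Classical solutions as flows -/

lemma L2_sq (f : ℝ → ℝ) : L2 f ^ 2 = ∫⁻ x, ENNReal.ofReal (f x ^ 2) := by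
  have h := eLpNorm_nnreal_pow_eq_lintegral (μ := volume) (f := f) (p := 2) (by norm_num)
  have h2 : L2 f ^ 2 = eLpNorm f ((2 : NNReal) : ENNReal) volume ^ ((2 : NNReal) : ℝ) := by
    simp [L2]
  rw [h2, h]
  refine lintegral_congr fun x => ?_
  rw [← ofReal_norm, NNReal.coe_ofNat, ENNReal.ofReal_rpow_of_nonneg (norm_nonneg _)
    (by norm_num)]
  congr 1
  simp

lemma L2le_of_L2_sq_le {f : ℝ → ℝ} (hf : Continuous f) {c : ENNReal} (hc : c ≠ ⊤)
    (h : L2 f ^ 2 ≤ c) : L2le f c.toReal := by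
  intro a b hab
  rw [intervalIntegral.integral_of_le hab,
    integral_eq_lintegral_of_nonneg_ae (Eventually.of_forall fun x => sq_nonneg (f x))
      (hf.pow 2).aestronglyMeasurable]
  refine ENNReal.toReal_mono hc (le_trans ?_ h)
  rw [L2_sq]
  exact setLIntegral_le_lintegral _ _

lemma L2le_of_L2_le {f : ℝ → ℝ} (hf : Continuous f) {B : ℝ} (h : L2 f ≤ ENNReal.ofReal B) :
    L2le f (B ^ 2) := by
  have h1 : L2 f ^ 2 ≤ ENNReal.ofReal (B ^ 2) := by
    have h2 : L2 f ≤ ENNReal.ofReal |B| := h.trans (ENNReal.ofReal_le_ofReal (le_abs_self B))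
    calc L2 f ^ 2 ≤ ENNReal.ofReal |B| ^ 2 := by gcongr
      _ = ENNReal.ofReal (B ^ 2) := by
        rw [← ENNReal.ofReal_pow (abs_nonneg B), sq_abs]
  have := L2le_of_L2_sq_le hf ENNReal.ofReal_ne_top h1
  rwa [ENNReal.toReal_ofReal (sq_nonneg B)] at this

lemma L2le.mono {f : ℝ → ℝ} {B B' : ℝ} (h : L2le f B) (hB : B ≤ B') : L2le f B' :=
  fun a b hab => (h a b hab).trans hB

/-- Spatial derivatives of jointly measurable functions are jointly measurable, being limits of
difference quotients. -/
lemma measurable_x_deriv {f f' : ℝ → ℝ → ℝ} (hm : Measurable fun p : ℝ × ℝ => f p.1 p.2)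
    (hd : ∀ x t, HasDerivAt (fun y => f y t) (f' x t) x) :
    Measurable fun p : ℝ × ℝ => f' p.1 p.2 := by
  have hlim : Tendsto (fun n : ℕ => (1 : ℝ) / ((n : ℝ) + 1)) atTop (𝓝[≠] 0) := by
    refine tendsto_nhdsWithin_iff.2 ⟨tendsto_one_div_add_atTop_nhds_zero_nat, ?_⟩
    exact Eventually.of_forall fun n => by
      simp only [mem_compl_iff, mem_singleton_iff]; positivity
  refine measurable_of_tendsto_metrizable (f := fun (n : ℕ) (p : ℝ × ℝ) =>
    ((1 : ℝ) / ((n : ℝ) + 1))⁻¹ * (f (p.1 + (1 : ℝ) / ((n : ℝ) + 1)) p.2 - f p.1 p.2)) ?_ ?_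
  · intro n
    have : Measurable fun p : ℝ × ℝ => f (p.1 + (1 : ℝ) / ((n : ℝ) + 1)) p.2 :=
      hm.comp ((measurable_fst.add_const _).prodMk measurable_snd)
    exact (this.sub hm).const_mul _
  · rw [tendsto_pi_nhds]
    intro p
    have := ((hasDerivAt_iff_tendsto_slope_zero.1 (hd p.1 p.2)).comp hlim)
    simpa [Function.comp_def] using this

/-- A classical solution with `(M, m)`-bounded data, frozen at its initial value for negative
times, together with explicit spatial derivatives. The `L²` bounds are recorded on bounded
intervals, and the `L²(0,T;H²)` bound through a time-integrable function `q`. -/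
structure NSFlow (μ κ R cv M m : ℝ) where
  v : ℝ → ℝ → ℝ
  u : ℝ → ℝ → ℝ
  θ : ℝ → ℝ → ℝ
  vx : ℝ → ℝ → ℝ
  ux : ℝ → ℝ → ℝ
  uxx : ℝ → ℝ → ℝ
  θx : ℝ → ℝ → ℝ
  θxx : ℝ → ℝ → ℝ
  hμ : 0 < μ
  hκ : 0 < κ
  hR : 0 < R
  hcv : 0 < cv
  hm : 0 < m
  v_pos : ∀ x t, 0 < v x t
  θ_pos : ∀ x t, 0 < θ x t
  hv : ∀ x t, HasDerivAt (fun y => v y t) (vx x t) x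
  hu : ∀ x t, HasDerivAt (fun y => u y t) (ux x t) x
  hux : ∀ x t, HasDerivAt (fun y => ux y t) (uxx x t) x
  hθ : ∀ x t, HasDerivAt (fun y => θ y t) (θx x t) x
  hθx : ∀ x t, HasDerivAt (fun y => θx y t) (θxx x t) x
  cvx : ∀ t, Continuous fun x => vx x t
  cuxx : ∀ t, Continuous fun x => uxx x t
  cθxx : ∀ t, Continuous fun x => θxx x t
  tv : ∀ x, Continuous (v x)
  tu : ∀ x, Continuous (u x)
  tθ : ∀ x, Continuous (θ x)
  dv : ∀ x t, 0 < t → HasDerivAt (v x) (ux x t) t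
  du : ∀ x t, 0 < t → HasDerivAt (u x)
    (μ * (uxx x t / v x t - ux x t * vx x t / v x t ^ 2)
      - R * (θx x t / v x t - θ x t * vx x t / v x t ^ 2)) t
  dθ : ∀ x t, 0 < t → HasDerivAt (θ x)
    (cv⁻¹ * (κ * (θxx x t / v x t - θx x t * vx x t / v x t ^ 2)
      + μ * ux x t ^ 2 / v x t - R * θ x t / v x t * ux x t)) t
  bdd : ∀ T, ∃ B, 1 ≤ B ∧ ∀ t ≤ T,
    L2le (fun x => v x t - 1) B ∧ L2le (fun x => vx x t) B ∧
    L2le (fun x => u x t) B ∧ L2le (fun x => ux x t) B ∧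
    L2le (fun x => θ x t - 1) B ∧ L2le (fun x => θx x t) B
  bdd2 : ∀ T, 0 < T → ∃ q : ℝ → ℝ, (∀ τ, 0 ≤ q τ) ∧ IntervalIntegrable q volume 0 T ∧
    ∀ᵐ τ, τ ∈ Ioc 0 T → L2le (fun x => uxx x τ) (q τ) ∧ L2le (fun x => θxx x τ) (q τ)
  far_v : ∀ t, Tendsto (fun x => v x t) (cocompact ℝ) (𝓝 1)
  far_u : ∀ t, Tendsto (fun x => u x t) (cocompact ℝ) (𝓝 0)
  far_θ : ∀ t, Tendsto (fun x => θ x t) (cocompact ℝ) (𝓝 1)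
  init_v : L2le (fun x => v x 0 - 1) (M ^ 2)
  init_vx : L2le (fun x => vx x 0) (M ^ 2)
  init_u : L2le (fun x => u x 0) (M ^ 2)
  init_θ : L2le (fun x => θ x 0 - 1) (M ^ 2)
  low_v : ∀ x, m ≤ v x 0
  low_θ : ∀ x, m ≤ θ x 0

lemma hasDerivAt_clamp {f : ℝ → ℝ} {f' t : ℝ} (ht : 0 < t) (h : HasDerivAt f f' t) :
    HasDerivAt (fun s => f (max s 0)) f' t := by
  refine h.congr_of_eventuallyEq ?_
  filter_upwards [lt_mem_nhds ht] with s hs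
  rw [max_eq_left hs.le]

lemma continuous_clamp {f : ℝ → ℝ} (h : ∀ t, 0 ≤ t → DifferentiableAt ℝ f t) :
    Continuous (fun s => f (max s 0)) := by
  have : ContinuousOn f (Ici 0) := fun t ht => (h t ht).continuousAt.continuousWithinAt
  exact this.comp_continuous (by fun_prop) (fun s => mem_Ici.2 (le_max_right _ _))

lemma contDiff_two_facts {f : ℝ → ℝ} (h : ContDiff ℝ 2 f) :
    (∀ x, HasDerivAt f (deriv f x) x) ∧ Continuous (deriv f) ∧
    (∀ x, HasDerivAt (deriv f) (deriv (deriv f) x) x) ∧ Continuous (deriv (deriv f)) := by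
  have h1 : ContDiff ℝ 1 (deriv f) := h.deriv' (n := 1)
  exact ⟨fun x => (h.differentiable (by norm_num) x).hasDerivAt, h1.continuous,
    fun x => (h1.differentiable (by norm_num) x).hasDerivAt, h1.continuous_deriv le_rfl⟩

/-- Every classical solution with bounded data gives rise to a flow. -/
lemma exists_flow {μ κ R cv M m : ℝ} (hμ : 0 < μ) (hκ : 0 < κ) (hR : 0 < R) (hcv : 0 < cv)
    (hm : 0 < m) {v u θ : ℝ → ℝ → ℝ}
    (h : IsClassicalSolution μ κ R cv v u θ) (h0 : InitBounded M m v u θ) :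
    ∃ F : NSFlow μ κ R cv M m, F.v = fun x t => v x (max t 0) := by
  have hp : ∀ t : ℝ, 0 ≤ max t 0 := fun t => le_max_right _ _
  have fv := fun t => contDiff_two_facts (h.smooth_x_v (max t 0) (hp t))
  have fu := fun t => contDiff_two_facts (h.smooth_x_u (max t 0) (hp t))
  have fθ := fun t => contDiff_two_facts (h.smooth_x_θ (max t 0) (hp t))
  have quot : ∀ (f g : ℝ → ℝ) (f' g' x : ℝ), HasDerivAt f f' x → HasDerivAt g g' x → 0 < g x →
      deriv (fun y => f y / g y) x = f' / g x - f x * g' / g x ^ 2 := by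
    intro f g f' g' x hf hg hg0
    rw [(hf.fun_div hg hg0.ne').deriv]
    field_simp
  -- joint measurability of the second derivatives in space
  have muu : Measurable fun p : ℝ × ℝ => u p.1 (max p.2 0) :=
    measurable_uncurry_of_continuous_of_measurable (u := fun x t => u x (max t 0))
      (fun t => (h.smooth_x_u (max t 0) (hp t)).continuous)
      (fun x => (continuous_clamp (h.smooth_t_u x)).measurable)
  have mθθ : Measurable fun p : ℝ × ℝ => θ p.1 (max p.2 0) :=
    measurable_uncurry_of_continuous_of_measurable (u := fun x t => θ x (max t 0))
      (fun t => (h.smooth_x_θ (max t 0) (hp t)).continuous)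
      (fun x => (continuous_clamp (h.smooth_t_θ x)).measurable)
  have muxx := measurable_x_deriv (measurable_x_deriv muu fun x t => (fu t).1 x)
    fun x t => (fu t).2.2.1 x
  have mθxx := measurable_x_deriv (measurable_x_deriv mθθ fun x t => (fθ t).1 x)
    fun x t => (fθ t).2.2.1 x
  have dsub : ∀ f : ℝ → ℝ, deriv (fun x => f x - 1) = deriv f := by
    intro f; ext x; exact deriv_sub_const _
  have six : ∀ {t B : ℝ}, 0 ≤ t →
      H1 (fun x => v x t - 1) + H1 (fun x => u x t) + H1 (fun x => θ x t - 1)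
        ≤ ENNReal.ofReal B →
      L2le (fun x => v x t - 1) (B ^ 2) ∧ L2le (deriv fun x => v x t) (B ^ 2) ∧
      L2le (fun x => u x t) (B ^ 2) ∧ L2le (deriv fun x => u x t) (B ^ 2) ∧
      L2le (fun x => θ x t - 1) (B ^ 2) ∧ L2le (deriv fun x => θ x t) (B ^ 2) := by
    intro t B ht hB
    simp only [H1, dsub] at hB
    have cv := contDiff_two_facts (h.smooth_x_v t ht)
    have cu := contDiff_two_facts (h.smooth_x_u t ht)
    have cθ := contDiff_two_facts (h.smooth_x_θ t ht)
    have kv := (h.smooth_x_v t ht).continuous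
    have ku := (h.smooth_x_u t ht).continuous
    have kθ := (h.smooth_x_θ t ht).continuous
    refine ⟨L2le_of_L2_le (by fun_prop) (le_trans ?_ hB), L2le_of_L2_le cv.2.1 (le_trans ?_ hB),
      L2le_of_L2_le ku (le_trans ?_ hB), L2le_of_L2_le cu.2.1 (le_trans ?_ hB),
      L2le_of_L2_le (by fun_prop) (le_trans ?_ hB), L2le_of_L2_le cθ.2.1 (le_trans ?_ hB)⟩
    · rw [add_assoc, add_assoc]; exact le_self_add
    · rw [add_assoc]; exact le_add_right le_add_self
    · exact le_add_right (le_add_left le_self_add)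
    · exact le_add_right (le_add_left le_add_self)
    · exact le_add_left le_self_add
    · exact le_add_left le_add_self
  have i0 := six le_rfl h0.1
  refine ⟨{
    v := fun x t => v x (max t 0)
    u := fun x t => u x (max t 0)
    θ := fun x t => θ x (max t 0)
    vx := fun x t => deriv (fun y => v y (max t 0)) x
    ux := fun x t => deriv (fun y => u y (max t 0)) x
    uxx := fun x t => deriv (deriv (fun y => u y (max t 0))) x
    θx := fun x t => deriv (fun y => θ y (max t 0)) x
    θxx := fun x t => deriv (deriv (fun y => θ y (max t 0))) x
    hμ := hμ
    hκ := hκ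
    hR := hR
    hcv := hcv
    hm := hm
    v_pos := fun x t => h.v_pos x _ (hp t)
    θ_pos := fun x t => h.θ_pos x _ (hp t)
    hv := fun x t => (fv t).1 x
    hu := fun x t => (fu t).1 x
    hux := fun x t => (fu t).2.2.1 x
    hθ := fun x t => (fθ t).1 x
    hθx := fun x t => (fθ t).2.2.1 x
    cvx := fun t => (fv t).2.1
    cuxx := fun t => (fu t).2.2.2
    cθxx := fun t => (fθ t).2.2.2
    tv := fun x => continuous_clamp (h.smooth_t_v x)
    tu := fun x => continuous_clamp (h.smooth_t_u x)
    tθ := fun x => continuous_clamp (h.smooth_t_θ x)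
    dv := ?_
    du := ?_
    dθ := ?_
    bdd := ?_
    bdd2 := ?_
    far_v := fun t => h.farfield_v _ (hp t)
    far_u := fun t => h.farfield_u _ (hp t)
    far_θ := fun t => h.farfield_θ _ (hp t)
    init_v := by simpa using i0.1
    init_vx := by simpa using i0.2.1
    init_u := by simpa using i0.2.2.1
    init_θ := by simpa using i0.2.2.2.2.1
    low_v := by simpa using h0.2.1
    low_θ := by simpa using h0.2.2
    }, rfl⟩
  · intro x t ht
    rw [max_eq_left ht.le]
    have := (h.smooth_t_v x t ht.le).hasDerivAt
    rw [show deriv (fun s => v x s) t = _ from h.eq_mass x t ht.le] at this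
    exact hasDerivAt_clamp ht this
  · intro x t ht
    have hm := h.eq_momentum x t ht.le
    have := (h.smooth_t_u x t ht.le).hasDerivAt
    have e := eq_sub_of_add_eq hm
    rw [show deriv (fun s => u x s) t = _ from e] at this
    have fv := fv t; have fu := fu t; have fθ := fθ t
    rw [max_eq_left ht.le] at fv fu fθ ⊢
    have e1 : pdx (fun y s => pdx u y s / v y s) x t = _ :=
      quot _ _ _ _ x (fu.2.2.1 x) (fv.1 x) (h.v_pos x t ht.le)
    have e2 : pdx (fun y s => R * θ y s / v y s) x t = _ :=
      quot _ _ _ _ x ((fθ.1 x).const_mul R) (fv.1 x) (h.v_pos x t ht.le)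
    rw [e1, e2] at this
    refine (hasDerivAt_clamp ht this).congr_deriv ?_
    simp only [pdx]
    ring
  · intro x t ht
    have hm := h.eq_energy x t ht.le
    have := (h.smooth_t_θ x t ht.le).hasDerivAt
    have fv := fv t; have fu := fu t; have fθ := fθ t
    rw [max_eq_left ht.le] at fv fu fθ ⊢
    have e1 : pdx (fun y s => pdx θ y s / v y s) x t = _ :=
      quot _ _ _ _ x (fθ.2.2.1 x) (fv.1 x) (h.v_pos x t ht.le)
    rw [e1] at hm
    refine (hasDerivAt_clamp ht this).congr_deriv ?_
    have e := eq_sub_of_add_eq hm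
    rw [eq_inv_mul_iff_mul_eq₀ hcv.ne']
    exact e
  · intro T
    obtain ⟨B, hB⟩ := h.reg_H1 (max T 0) (hp T)
    refine ⟨B ^ 2 + 1, by nlinarith [sq_nonneg B], fun t ht => ?_⟩
    have := six (hp t) (hB (max t 0) ⟨hp t, max_le_max_right 0 ht⟩)
    have hle : B ^ 2 ≤ B ^ 2 + 1 := by linarith
    exact ⟨this.1.mono hle, this.2.1.mono hle, this.2.2.1.mono hle, this.2.2.2.1.mono hle,
      this.2.2.2.2.1.mono hle, this.2.2.2.2.2.mono hle⟩
  · intro T hT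
    set w : ℝ → ENNReal := fun t => L2 (deriv (deriv fun y => u y (max t 0))) ^ 2 +
      L2 (deriv (deriv fun y => θ y (max t 0))) ^ 2 with hw
    have mw : Measurable w := by
      rw [hw]
      simp only [L2_sq]
      exact (Measurable.lintegral_prod_left' (f := fun p : ℝ × ℝ =>
          ENNReal.ofReal (deriv (deriv fun y => u y (max p.2 0)) p.1 ^ 2))
          (muxx.pow_const 2).ennreal_ofReal).add
        (Measurable.lintegral_prod_left' (f := fun p : ℝ × ℝ =>
          ENNReal.ofReal (deriv (deriv fun y => θ y (max p.2 0)) p.1 ^ 2))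
          (mθxx.pow_const 2).ennreal_ofReal)
    have hfin : ∫⁻ t in Ioc 0 T, w t ≠ ⊤ := by
      refine (lt_of_le_of_lt ?_ (h.reg_H2 T hT)).ne
      refine (setLIntegral_mono' measurableSet_Ioc (fun t ht => ?_)).trans
        (lintegral_mono_set Ioc_subset_Icc_self)
      simp only [hw, max_eq_left ht.1.le, H2, dsub]
      gcongr <;> exact le_add_self
    refine ⟨fun t => (w t).toReal, fun t => ENNReal.toReal_nonneg, ?_, ?_⟩
    · rw [intervalIntegrable_iff_integrableOn_Ioc_of_le hT.le]
      exact integrable_toReal_of_lintegral_ne_top mw.aemeasurable hfin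
    · have := ae_lt_top mw hfin
      rw [ae_restrict_iff' measurableSet_Ioc] at this
      filter_upwards [this] with t h1 ht
      exact ⟨L2le_of_L2_sq_le (fu t).2.2.2 (h1 ht).ne le_self_add,
        L2le_of_L2_sq_le (fθ t).2.2.2 (h1 ht).ne le_add_self⟩

/-! ### Qualitative control on finite time intervals: bounds and positivity of the volume -/

/-- If `f(·, t)` is `ε/2`-close to `c` near infinity for each `t` and `t ↦ f(·, t)` is continuous
in the supremum norm with modulus `Γ`, it is `ε`-close to `c` uniformly on `[0, T]`. -/
lemma uniform_far {f : ℝ → ℝ → ℝ} {Γ : ℝ → ℝ} {T c : ℝ} (hΓ : ContinuousOn Γ (Icc 0 T))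
    (hf : ∀ x, ∀ s ∈ Icc 0 T, ∀ t ∈ Icc 0 T, |f x t - f x s| ≤ |Γ t - Γ s|)
    {ε : ℝ} (hε : 0 < ε) (hl : ∀ t ∈ Icc 0 T, ∀ᶠ x in cocompact ℝ, |f x t - c| < ε / 2) :
    ∀ᶠ x in cocompact ℝ, ∀ t ∈ Icc 0 T, |f x t - c| < ε := by
  refine isCompact_Icc.induction_on (p := fun S => ∀ᶠ x in cocompact ℝ, ∀ t ∈ S, |f x t - c| < ε)
    (by simp) (fun s t hst ht => ht.mono fun x hx y hy => hx y (hst hy))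
    (fun s t hs ht => ?_) (fun t ht => ?_)
  · filter_upwards [hs, ht] with x h1 h2 y hy
    exact hy.elim (h1 y) (h2 y)
  · have h1 : ∀ᶠ s in 𝓝[Icc 0 T] t, |Γ s - Γ t| < ε / 2 :=
      (Metric.tendsto_nhds.1 (hΓ t ht)) (ε / 2) (by positivity)
    refine ⟨{s | |Γ s - Γ t| < ε / 2} ∩ Icc 0 T, inter_mem h1 self_mem_nhdsWithin, ?_⟩
    filter_upwards [hl t ht] with x hx s hs
    have h3 := hf x t ht s hs.2
    have h4 : |Γ s - Γ t| < ε / 2 := hs.1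
    have := abs_sub_le (f x s) (f x t) c
    linarith

/-- Positivity plus a uniform far-field bound give a uniform positive lower bound, by compactness. -/
lemma exists_pos_lower {f : ℝ → ℝ → ℝ} {T : ℝ} (hc : Continuous fun p : ℝ × ℝ => f p.1 p.2)
    (hp : ∀ x t, 0 < f x t)
    (hf : ∀ᶠ x in cocompact ℝ, ∀ t ∈ Icc 0 T, 1 / 2 ≤ f x t) :
    ∃ c, 0 < c ∧ ∀ x, ∀ t ∈ Icc 0 T, c ≤ f x t := by
  obtain ⟨K, hK, hKf⟩ := mem_cocompact.1 hf
  rcases (K ×ˢ Icc 0 T).eq_empty_or_nonempty with he | hne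
  · refine ⟨1 / 2, by norm_num, fun x t ht => ?_⟩
    refine hKf (fun hx => ?_) t ht
    have : (x, t) ∈ K ×ˢ Icc 0 T := ⟨hx, ht⟩
    rw [he] at this
    exact this
  · obtain ⟨p, hp1, hp2⟩ := (hK.prod isCompact_Icc).exists_isMinOn hne hc.continuousOn
    refine ⟨min (1 / 2) (f p.1 p.2), lt_min (by norm_num) (hp _ _), fun x t ht => ?_⟩
    by_cases hx : x ∈ K
    · exact (min_le_right _ _).trans (hp2 (show (x, t) ∈ K ×ˢ Icc 0 T from ⟨hx, ht⟩))
    · exact (min_le_left _ _).trans (hKf hx t ht)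

lemma abs_le_one_add_sq (z : ℝ) : |z| ≤ 1 + z ^ 2 := by
  rw [abs_le]; constructor <;> nlinarith [sq_nonneg (z - 1), sq_nonneg (z + 1)]

namespace NSFlow

variable {μ κ R cv M m : ℝ} (F : NSFlow μ κ R cv M m)

lemma cv_x (t : ℝ) : Continuous fun x => F.v x t :=
  continuous_iff_continuousAt.2 fun x => (F.hv x t).continuousAt
lemma cu_x (t : ℝ) : Continuous fun x => F.u x t :=
  continuous_iff_continuousAt.2 fun x => (F.hu x t).continuousAt
lemma cθ_x (t : ℝ) : Continuous fun x => F.θ x t :=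
  continuous_iff_continuousAt.2 fun x => (F.hθ x t).continuousAt
lemma cux (t : ℝ) : Continuous fun x => F.ux x t :=
  continuous_iff_continuousAt.2 fun x => (F.hux x t).continuousAt
lemma cθx (t : ℝ) : Continuous fun x => F.θx x t :=
  continuous_iff_continuousAt.2 fun x => (F.hθx x t).continuousAt

lemma jv : Continuous fun p : ℝ × ℝ => F.v p.1 p.2 :=
  continuous_uncurry_of_L2le F.hv F.cvx F.tv fun T => by
    obtain ⟨B, -, hB⟩ := F.bdd T
    exact ⟨B, fun t ht => (hB t ht).2.1⟩
lemma ju : Continuous fun p : ℝ × ℝ => F.u p.1 p.2 :=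
  continuous_uncurry_of_L2le F.hu F.cux F.tu fun T => by
    obtain ⟨B, -, hB⟩ := F.bdd T
    exact ⟨B, fun t ht => (hB t ht).2.2.2.1⟩
lemma jθ : Continuous fun p : ℝ × ℝ => F.θ p.1 p.2 :=
  continuous_uncurry_of_L2le F.hθ F.cθx F.tθ fun T => by
    obtain ⟨B, -, hB⟩ := F.bdd T
    exact ⟨B, fun t ht => (hB t ht).2.2.2.2.2⟩

lemma mvx : Measurable fun p : ℝ × ℝ => F.vx p.1 p.2 := measurable_x_deriv F.jv.measurable F.hv
lemma mux : Measurable fun p : ℝ × ℝ => F.ux p.1 p.2 := measurable_x_deriv F.ju.measurable F.hu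
lemma muxx : Measurable fun p : ℝ × ℝ => F.uxx p.1 p.2 := measurable_x_deriv F.mux F.hux
lemma mθx : Measurable fun p : ℝ × ℝ => F.θx p.1 p.2 := measurable_x_deriv F.jθ.measurable F.hθ
lemma mθxx : Measurable fun p : ℝ × ℝ => F.θxx p.1 p.2 := measurable_x_deriv F.mθx F.hθx

/-- The quadratic quantity that dominates all time derivatives on `[0, T]`. -/
def G (x t : ℝ) : ℝ :=
  1 + F.vx x t ^ 2 + F.ux x t ^ 2 + F.uxx x t ^ 2 + F.θx x t ^ 2 + F.θxx x t ^ 2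

/-- A-priori qualitative control on `[0, T]`: uniform bounds by `N` and a time-integrable
function `Q` bounding the spatial suprema and local `L¹` norms. -/
lemma ctrl {T : ℝ} (hT : 0 < T) : ∃ (N : ℝ) (Q : ℝ → ℝ), 1 ≤ N ∧
    IntervalIntegrable Q volume 0 T ∧
    (∀ x, ∀ t ≤ T, F.v x t ≤ N ∧ |F.u x t| ≤ N ∧ F.θ x t ≤ N) ∧
    (∀ t ≤ T, L2le (fun x => F.θx x t) N) ∧
    (∀ᵐ τ, τ ∈ Ioc 0 T → (∀ a b, a ≤ b → ∫ x in a..b, F.G x τ ≤ (b - a) + Q τ) ∧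
      ∀ x, 1 + F.ux x τ ^ 2 + F.θx x τ ^ 2 ≤ Q τ) := by
  obtain ⟨B, hB1, hB⟩ := F.bdd T
  obtain ⟨q, hq0, hqi, hq⟩ := F.bdd2 T hT
  refine ⟨2 + 3 * B, fun τ => 1 + 4 * B + 2 * q τ, by linarith, ?_, ?_, ?_, ?_⟩
  · exact (continuous_const.intervalIntegrable _ _).add (hqi.const_mul 2)
  · intro x t ht
    obtain ⟨h1, h2, h3, h4, h5, h6⟩ := hB t ht
    have e1 := h1.sup h2 (fun z => (F.hv z t).sub_const 1) (F.cvx t) x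
    have e2 := h3.sup h4 (fun z => F.hu z t) (F.cux t) x
    have e3 := h5.sup h6 (fun z => (F.hθ z t).sub_const 1) (F.cθx t) x
    have a1 := abs_le_one_add_sq (F.v x t - 1)
    have a2 := abs_le_one_add_sq (F.u x t)
    have a3 := abs_le_one_add_sq (F.θ x t - 1)
    refine ⟨?_, ?_, ?_⟩
    · linarith [le_abs_self (F.v x t - 1)]
    · linarith
    · linarith [le_abs_self (F.θ x t - 1)]
  · intro t ht
    exact (hB t ht).2.2.2.2.2.mono (by linarith)
  · filter_upwards [hq] with τ hτ' hτ
    obtain ⟨g1, g2⟩ := hτ' hτ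
    obtain ⟨h1, h2, h3, h4, h5, h6⟩ := hB τ hτ.2
    constructor
    · intro a b hab
      have c1 := F.cvx τ; have c2 := F.cux τ; have c3 := F.cuxx τ
      have c4 := F.cθx τ; have c5 := F.cθxx τ
      have e : ∫ x in a..b, F.G x τ = (b - a) + (∫ x in a..b, F.vx x τ ^ 2)
          + (∫ x in a..b, F.ux x τ ^ 2) + (∫ x in a..b, F.uxx x τ ^ 2)
          + (∫ x in a..b, F.θx x τ ^ 2) + (∫ x in a..b, F.θxx x τ ^ 2) := by
        simp only [G]
        rw [intervalIntegral.integral_add, intervalIntegral.integral_add,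
          intervalIntegral.integral_add, intervalIntegral.integral_add,
          intervalIntegral.integral_add, intervalIntegral.integral_const]
        · simp
        all_goals exact Continuous.intervalIntegrable (by fun_prop) _ _
      rw [e]
      have := h2 a b hab; have := h4 a b hab; have := h6 a b hab
      have := g1 a b hab; have := g2 a b hab
      simp only at *
      linarith
    · intro x
      have e1 := h4.sup g1 (fun z => F.hux z τ) (F.cuxx τ) x
      have e2 := h6.sup g2 (fun z => F.hθx z τ) (F.cθxx τ) x
      linarith

/-- Space-time fundamental theorem of calculus for time derivatives dominated by `G`. -/
lemma rect {f g : ℝ → ℝ → ℝ} {T C : ℝ} (hT : 0 < T)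
    (hft : ∀ x, Continuous (f x)) (hfx : ∀ τ, Continuous fun x => f x τ)
    (hd : ∀ x τ, 0 < τ → HasDerivAt (f x) (g x τ) τ)
    (hm : Measurable fun p : ℝ × ℝ => g p.1 p.2)
    (hc : ∀ τ, Continuous fun x => g x τ)
    {a b s t : ℝ} (hab : a ≤ b) (hs : 0 ≤ s) (hst : s ≤ t) (htT : t ≤ T)
    (hb : ∀ x ∈ Icc a b, ∀ τ ∈ Ioc 0 T, |g x τ| ≤ C * F.G x τ) :
    IntervalIntegrable (fun τ => ∫ x in a..b, g x τ) volume s t ∧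
    (∫ x in a..b, f x t) - (∫ x in a..b, f x s) = ∫ τ in s..t, ∫ x in a..b, g x τ := by
  obtain ⟨N, Q, -, hQi, -, -, hQ⟩ := F.ctrl hT
  have hsub : uIcc s t ⊆ uIcc 0 T := by
    rw [uIcc_of_le hst, uIcc_of_le hT.le]; exact Icc_subset_Icc hs htT
  have hC : C ≤ |C| := le_abs_self C
  refine rect_ftc (q := fun τ => |C| * ((b - a) + Q τ)) hab hs hst hft hfx hd hm hc ?_ ?_
  · exact (((continuous_const.intervalIntegrable _ _).add hQi).const_mul _).mono_set hsub
  · filter_upwards [hQ] with τ h1 hτ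
    have hτ' : τ ∈ Ioc 0 T := ⟨lt_of_le_of_lt hs hτ.1, hτ.2.trans htT⟩
    have c0 := hc τ
    have c1 := F.cvx τ; have c2 := F.cux τ; have c3 := F.cuxx τ
    have c4 := F.cθx τ; have c5 := F.cθxx τ
    have cG : Continuous fun x => F.G x τ := by simp only [G]; fun_prop
    calc ∫ x in a..b, |g x τ| ≤ ∫ x in a..b, |C| * F.G x τ := by
          refine integral_le_of_continuous (by fun_prop) (by fun_prop) hab fun x hx => ?_
          refine (hb x hx τ hτ').trans (mul_le_mul_of_nonneg_right hC ?_)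
          simp only [G]; positivity
      _ = |C| * ∫ x in a..b, F.G x τ := by rw [intervalIntegral.integral_const_mul]
      _ ≤ _ := by
          have := (h1 hτ').1 a b hab
          gcongr

/-- Local-in-time positive lower bound of the volume on the whole line, not uniform in `T`. Since
`|v_t| = |u_x|` is dominated by a time-integrable function, `v → 1` at infinity uniformly on
`[0, T]`, and compactness handles the rest. -/
lemma v_lower {T : ℝ} (hT : 0 < T) : ∃ c, 0 < c ∧ ∀ x, ∀ t ∈ Icc 0 T, c ≤ F.v x t := by
  obtain ⟨N, Q, -, hQi, -, -, hQ⟩ := F.ctrl hT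
  have hsub : ∀ {s t}, s ∈ Icc 0 T → t ∈ Icc 0 T → IntervalIntegrable Q volume s t := by
    intro s t hs ht
    refine hQi.mono_set ?_
    rw [uIcc_of_le hT.le]
    exact ordConnected_Icc.uIcc_subset hs ht
  refine exists_pos_lower F.jv F.v_pos ?_
  have hcont : ContinuousOn (fun t => ∫ τ in (0 : ℝ)..t, Q τ) (Icc 0 T) := by
    have := intervalIntegral.continuousOn_primitive_interval'
      (hQi : IntervalIntegrable Q volume 0 T) left_mem_uIcc
    rwa [uIcc_of_le hT.le] at this
  have hle : ∀ x, ∀ s ∈ Icc 0 T, ∀ t ∈ Icc 0 T, s ≤ t → |F.v x t - F.v x s| ≤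
      (∫ τ in (0 : ℝ)..t, Q τ) - ∫ τ in (0 : ℝ)..s, Q τ := by
    intro x s hs t ht hst
    have h0 : (0 : ℝ) ∈ Icc 0 T := ⟨le_rfl, hT.le⟩
    rw [intervalIntegral.integral_interval_sub_left (hsub h0 ht) (hsub h0 hs)]
    have hb : ∀ᵐ τ, τ ∈ Ioc s t → ‖F.ux x τ‖ ≤ Q τ := by
      filter_upwards [hQ] with τ h1 hτ
      have := (h1 ⟨lt_of_le_of_lt hs.1 hτ.1, hτ.2.trans ht.2⟩).2 x
      have := abs_le_one_add_sq (F.ux x τ)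
      rw [Real.norm_eq_abs]
      nlinarith [sq_nonneg (F.θx x τ)]
    have hi : IntervalIntegrable (F.ux x) volume s t := by
      rw [intervalIntegrable_iff_integrableOn_Ioc_of_le hst]
      refine Integrable.mono' ((intervalIntegrable_iff_integrableOn_Ioc_of_le hst).1
        (hsub hs ht)) ?_ ((ae_restrict_iff' measurableSet_Ioc).2 hb)
      exact (F.mux.comp (measurable_prodMk_left (x := x))).aestronglyMeasurable
    rw [← intervalIntegral.integral_eq_sub_of_hasDerivAt_of_le hst (F.tv x).continuousOn
      (fun τ hτ => F.dv x τ (lt_of_le_of_lt hs.1 hτ.1)) hi]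
    exact intervalIntegral.norm_integral_le_of_norm_le hst hb (hsub hs ht)
  have := uniform_far (f := F.v) (c := 1) hcont (fun x s hs t ht => ?_)
    (by norm_num : (0 : ℝ) < 1 / 2)
    (fun t _ => Metric.tendsto_nhds.1 (F.far_v t) _ (by norm_num))
  · filter_upwards [this] with x hx t ht
    have := (abs_lt.1 (hx t ht)).1
    linarith
  · rcases le_total s t with h | h
    · exact (hle x s hs t ht h).trans (le_abs_self _)
    · rw [abs_sub_comm, abs_sub_comm (∫ τ in (0 : ℝ)..t, Q τ)]
      exact (hle x t ht s hs h).trans (le_abs_self _)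

/-- The time derivative of `u`, written as the right-hand side of the momentum equation. -/
noncomputable def ut (x t : ℝ) : ℝ :=
    μ * (F.uxx x t / F.v x t - F.ux x t * F.vx x t / F.v x t ^ 2)
      - R * (F.θx x t / F.v x t - F.θ x t * F.vx x t / F.v x t ^ 2)

/-- The time derivative of `θ`, written as the right-hand side of the temperature equation. -/
noncomputable def θt (x t : ℝ) : ℝ :=
    cv⁻¹ * (κ * (F.θxx x t / F.v x t - F.θx x t * F.vx x t / F.v x t ^ 2)
      + μ * F.ux x t ^ 2 / F.v x t - R * F.θ x t / F.v x t * F.ux x t)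

end NSFlow

/-! ### Qualitative control on finite time intervals: positivity of the temperature -/

lemma abs_div_le {a b c v : ℝ} (hc : 0 < c) (hv : c ≤ v) (h : |a| ≤ b) : |a / v| ≤ b / c := by
  rw [abs_div, abs_of_pos (hc.trans_le hv)]
  exact div_le_div₀ ((abs_nonneg a).trans h) h hc hv

namespace NSFlow

variable {μ κ R cv M m : ℝ} (F : NSFlow μ κ R cv M m)

lemma one_le_G (x t : ℝ) : 1 ≤ F.G x t := by
  simp only [G]; nlinarith [sq_nonneg (F.vx x t), sq_nonneg (F.ux x t), sq_nonneg (F.uxx x t),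
    sq_nonneg (F.θx x t), sq_nonneg (F.θxx x t)]

lemma cG (t : ℝ) : Continuous fun x => F.G x t := by
  have c1 := F.cvx t; have c2 := F.cux t; have c3 := F.cuxx t
  have c4 := F.cθx t; have c5 := F.cθxx t
  simp only [G]; fun_prop

lemma G_bounds (x t : ℝ) : |F.ux x t| ≤ F.G x t ∧ |F.uxx x t| ≤ F.G x t ∧ |F.θx x t| ≤ F.G x t ∧
    |F.θxx x t| ≤ F.G x t ∧ |F.vx x t| ≤ F.G x t ∧ |F.ux x t * F.vx x t| ≤ F.G x t ∧
    |F.θx x t * F.vx x t| ≤ F.G x t ∧ |F.ux x t ^ 2| ≤ F.G x t ∧ |F.θx x t ^ 2| ≤ F.G x t := by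
  have p1 := sq_nonneg (F.vx x t); have p2 := sq_nonneg (F.ux x t)
  have p3 := sq_nonneg (F.uxx x t); have p4 := sq_nonneg (F.θx x t)
  have p5 := sq_nonneg (F.θxx x t)
  simp only [G]
  refine ⟨?_, ?_, ?_, ?_, ?_, ?_, ?_, ?_, ?_⟩
  · linarith [abs_le_one_add_sq (F.ux x t)]
  · linarith [abs_le_one_add_sq (F.uxx x t)]
  · linarith [abs_le_one_add_sq (F.θx x t)]
  · linarith [abs_le_one_add_sq (F.θxx x t)]
  · linarith [abs_le_one_add_sq (F.vx x t)]
  · rw [abs_le]; constructor <;>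
      nlinarith [sq_nonneg (F.ux x t - F.vx x t), sq_nonneg (F.ux x t + F.vx x t)]
  · rw [abs_le]; constructor <;>
      nlinarith [sq_nonneg (F.θx x t - F.vx x t), sq_nonneg (F.θx x t + F.vx x t)]
  · rw [abs_of_nonneg p2]; linarith
  · rw [abs_of_nonneg p4]; linarith

/-- Where `v` is bounded below and `θ` above, `u_t` and `θ_t` are dominated by `G`. -/
lemma dt_bound {c N : ℝ} (hc : 0 < c) (hN : 0 ≤ N) : ∃ C, 0 ≤ C ∧ ∀ x t, c ≤ F.v x t →
    F.θ x t ≤ N → |F.ut x t| ≤ C * F.G x t ∧ |F.θt x t| ≤ C * F.G x t := by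
  have := F.hμ; have := F.hκ; have hR := F.hR; have hcv := F.hcv
  refine ⟨(μ * (1 / c + 1 / c ^ 2) + R * (1 / c + N / c ^ 2)) +
    cv⁻¹ * (κ * (1 / c + 1 / c ^ 2) + μ / c + R * N / c), by positivity, fun x t hv hθ => ?_⟩
  have hv2 : c ^ 2 ≤ F.v x t ^ 2 := pow_le_pow_left₀ hc.le hv 2
  have hc2 : 0 < c ^ 2 := by positivity
  have hG := (F.one_le_G x t)
  have hG0 : 0 ≤ F.G x t := by linarith
  have hθ0 := F.θ_pos x t
  obtain ⟨g1, g2, g3, g4, g5, g6, g7, g8, g9⟩ := F.G_bounds x t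
  have b1 := abs_div_le hc hv g2
  have b2 := abs_div_le hc2 hv2 g6
  have b3 := abs_div_le hc hv g3
  have b4 : |F.θ x t * F.vx x t / F.v x t ^ 2| ≤ N * F.G x t / c ^ 2 := by
    refine abs_div_le hc2 hv2 ?_
    rw [abs_mul, abs_of_pos hθ0]
    gcongr
  have b5 := abs_div_le hc hv g4
  have b6 := abs_div_le hc2 hv2 g7
  have b7 := abs_div_le hc hv g8
  have b8 : |F.θ x t * F.ux x t / F.v x t| ≤ N * F.G x t / c := by
    refine abs_div_le hc hv ?_
    rw [abs_mul, abs_of_pos hθ0]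
    gcongr
  have k1 : |F.ut x t| ≤ (μ * (1 / c + 1 / c ^ 2) + R * (1 / c + N / c ^ 2)) * F.G x t := by
    calc |F.ut x t| ≤ μ * (|F.uxx x t / F.v x t| + |F.ux x t * F.vx x t / F.v x t ^ 2|)
          + R * (|F.θx x t / F.v x t| + |F.θ x t * F.vx x t / F.v x t ^ 2|) := by
          simp only [ut]
          refine (abs_sub _ _).trans ?_
          rw [abs_mul, abs_mul, abs_of_pos F.hμ, abs_of_pos hR]
          gcongr <;> exact abs_sub _ _
      _ ≤ μ * (F.G x t / c + F.G x t / c ^ 2) + R * (F.G x t / c + N * F.G x t / c ^ 2) := by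
          gcongr
      _ = _ := by ring
  have k2 : |F.θt x t| ≤ cv⁻¹ * (κ * (1 / c + 1 / c ^ 2) + μ / c + R * N / c) * F.G x t := by
    have e : F.θt x t = cv⁻¹ * (κ * (F.θxx x t / F.v x t - F.θx x t * F.vx x t / F.v x t ^ 2)
      + μ * (F.ux x t ^ 2 / F.v x t) - R * (F.θ x t * F.ux x t / F.v x t)) := by
      simp only [θt]; ring
    calc |F.θt x t| ≤ cv⁻¹ * (κ * (|F.θxx x t / F.v x t| + |F.θx x t * F.vx x t / F.v x t ^ 2|)
          + μ * |F.ux x t ^ 2 / F.v x t| + R * |F.θ x t * F.ux x t / F.v x t|) := by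
          rw [e, abs_mul, abs_of_pos (inv_pos.2 hcv)]
          gcongr
          refine (abs_sub _ _).trans ?_
          rw [abs_mul R, abs_of_pos hR]
          gcongr
          refine (abs_add_le _ _).trans ?_
          rw [abs_mul μ, abs_of_pos F.hμ, abs_mul κ, abs_of_pos F.hκ]
          gcongr
          exact abs_sub _ _
      _ ≤ cv⁻¹ * (κ * (F.G x t / c + F.G x t / c ^ 2) + μ * (F.G x t / c)
            + R * (N * F.G x t / c)) := by
          gcongr
      _ = _ := by ring
  have q1 : 0 ≤ (μ * (1 / c + 1 / c ^ 2) + R * (1 / c + N / c ^ 2)) * F.G x t := by positivity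
  have q2 : 0 ≤ cv⁻¹ * (κ * (1 / c + 1 / c ^ 2) + μ / c + R * N / c) * F.G x t := by positivity
  rw [add_mul]
  exact ⟨by linarith, by linarith⟩

lemma m_ut : Measurable fun p : ℝ × ℝ => F.ut p.1 p.2 := by
  have := F.jv.measurable; have := F.jθ.measurable; have := F.mvx; have := F.mux
  have := F.muxx; have := F.mθx
  simp only [ut]; fun_prop
lemma mθt : Measurable fun p : ℝ × ℝ => F.θt p.1 p.2 := by
  have := F.jv.measurable; have := F.jθ.measurable; have := F.mvx; have := F.mux
  have := F.mθxx; have := F.mθx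
  simp only [θt]; fun_prop
lemma cut (t : ℝ) : Continuous fun x => F.ut x t := by
  have := F.cv_x t; have := F.cθ_x t; have := F.cvx t; have := F.cux t
  have := F.cuxx t; have := F.cθx t
  have h0 : ∀ x, F.v x t ≠ 0 := fun x => (F.v_pos x t).ne'
  have h2 : ∀ x, F.v x t ^ 2 ≠ 0 := fun x => pow_ne_zero _ (h0 x)
  simp only [ut]; fun_prop (disch := assumption)
lemma cθt (t : ℝ) : Continuous fun x => F.θt x t := by
  have := F.cv_x t; have := F.cθ_x t; have := F.cvx t; have := F.cux t
  have := F.cθxx t; have := F.cθx t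
  have h0 : ∀ x, F.v x t ≠ 0 := fun x => (F.v_pos x t).ne'
  have h2 : ∀ x, F.v x t ^ 2 ≠ 0 := fun x => pow_ne_zero _ (h0 x)
  simp only [θt]; fun_prop (disch := assumption)

/-- Local-in-time positive lower bound of the temperature on the whole line, not uniform in `T`. As
`θ_t` is controlled only in `L¹` over bounded intervals, the uniform far-field limit is proved for
spatial averages of `θ`, from which `θ` differs little. -/
lemma θ_lower {T : ℝ} (hT : 0 < T) : ∃ c, 0 < c ∧ ∀ x, ∀ t ∈ Icc 0 T, c ≤ F.θ x t := by
  obtain ⟨N, Q, hN, hQi, hNb, hL, hQ⟩ := F.ctrl hT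
  obtain ⟨c, hc, hcv⟩ := F.v_lower hT
  obtain ⟨C, hC, hCb⟩ := F.dt_bound hc (by linarith : 0 ≤ N)
  -- on windows of length `δ` the temperature oscillates by at most `1 / 8`
  set δ : ℝ := 1 / (64 * N) with hδ
  have hδ0 : 0 < δ := by positivity
  have hosc : ∀ x, ∀ t ≤ T, ∀ y ∈ Icc x (x + δ), |F.θ y t - F.θ x t| ≤ 1 / 8 := by
    intro x t ht y hy
    have := (hL t ht).osc (l := 1 / (8 * N)) (fun z => F.hθ z t) (F.cθx t) (by positivity) x y
    refine this.trans ?_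
    have h1 : |y - x| ≤ δ := by rw [abs_of_nonneg (by linarith [hy.1])]; linarith [hy.2]
    have h2 : 1 / (8 * N) * N = 1 / 8 := by field_simp
    have h3 : |y - x| / (1 / (8 * N)) ≤ 1 / 8 := by
      rw [div_le_iff₀ (by positivity)]
      refine h1.trans (le_of_eq ?_)
      rw [hδ]; field_simp; norm_num
    rw [h2]; linarith
  have hQ' : IntervalIntegrable (fun τ => C * (δ + Q τ) / δ) volume 0 T :=
    ((continuous_const.intervalIntegrable _ _).add hQi |>.const_mul C).div_const δ
  have hsub : ∀ {s t}, s ∈ Icc 0 T → t ∈ Icc 0 T →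
      IntervalIntegrable (fun τ => C * (δ + Q τ) / δ) volume s t := by
    intro s t hs ht
    refine hQ'.mono_set ?_
    rw [uIcc_of_le hT.le]
    exact ordConnected_Icc.uIcc_subset hs ht
  have hcont : ContinuousOn (fun t => ∫ τ in (0 : ℝ)..t, C * (δ + Q τ) / δ) (Icc 0 T) := by
    have := intervalIntegral.continuousOn_primitive_interval'
      (hQ' : IntervalIntegrable _ volume 0 T) left_mem_uIcc
    rwa [uIcc_of_le hT.le] at this
  set A : ℝ → ℝ → ℝ := fun x t => (∫ y in x..(x + δ), F.θ y t) / δ with hA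
  have hAθ : ∀ x, ∀ t ≤ T, |A x t - F.θ x t| ≤ 1 / 8 := by
    intro x t ht
    have e : A x t - F.θ x t = (∫ y in x..(x + δ), (F.θ y t - F.θ x t)) / δ := by
      rw [intervalIntegral.integral_sub ((F.cθ_x t).intervalIntegrable _ _)
        (continuous_const.intervalIntegrable _ _), intervalIntegral.integral_const, hA]
      simp only [add_sub_cancel_left, smul_eq_mul]
      field_simp
    rw [e, abs_div, abs_of_pos hδ0, div_le_iff₀ hδ0]
    have := intervalIntegral.norm_integral_le_of_norm_le_const
      (a := x) (b := x + δ) (f := fun y => F.θ y t - F.θ x t) (C := 1 / 8) (fun y hy => by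
        rw [uIoc_of_le (by linarith)] at hy
        exact hosc x t ht y ⟨hy.1.le, hy.2⟩)
    rwa [add_sub_cancel_left, abs_of_pos hδ0] at this
  have hle : ∀ x, ∀ s ∈ Icc 0 T, ∀ t ∈ Icc 0 T, s ≤ t → |A x t - A x s| ≤
      (∫ τ in (0 : ℝ)..t, C * (δ + Q τ) / δ) - ∫ τ in (0 : ℝ)..s, C * (δ + Q τ) / δ := by
    intro x s hs t ht hst
    have h0 : (0 : ℝ) ∈ Icc 0 T := ⟨le_rfl, hT.le⟩
    rw [intervalIntegral.integral_interval_sub_left (hsub h0 ht) (hsub h0 hs)]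
    have hr := (F.rect (f := F.θ) (g := F.θt) (C := C) hT F.tθ F.cθ_x F.dθ F.mθt F.cθt
      (by linarith : x ≤ x + δ) hs.1 hst ht.2
      (fun y _ τ hτ => (hCb y τ (hcv y τ ⟨hτ.1.le, hτ.2⟩) (hNb y τ hτ.2).2.2).2)).2
    rw [hA]
    simp only
    rw [← sub_div, hr, ← intervalIntegral.integral_div]
    rw [← Real.norm_eq_abs]
    refine intervalIntegral.norm_integral_le_of_norm_le hst ?_ (hsub hs ht)
    filter_upwards [hQ] with τ h1 hτ
    have hτ' : τ ∈ Ioc 0 T := ⟨lt_of_le_of_lt hs.1 hτ.1, hτ.2.trans ht.2⟩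
    have h2 := (h1 hτ').1 x (x + δ) (by linarith)
    rw [Real.norm_eq_abs, abs_div, abs_of_pos hδ0]
    gcongr
    refine (intervalIntegral.abs_integral_le_integral_abs (by linarith)).trans ?_
    have c0 := F.cθt τ
    have c1 := F.cG τ
    calc ∫ y in x..(x + δ), |F.θt y τ| ≤ ∫ y in x..(x + δ), C * F.G y τ :=
          integral_le_of_continuous (by fun_prop) (by fun_prop) (by linarith) fun y hy =>
            (hCb y τ (hcv y τ ⟨hτ'.1.le, hτ'.2⟩) (hNb y τ hτ'.2).2.2).2
      _ = C * ∫ y in x..(x + δ), F.G y τ := by rw [intervalIntegral.integral_const_mul]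
      _ ≤ _ := by
          gcongr
          linarith
  refine exists_pos_lower F.jθ F.θ_pos ?_
  have := uniform_far (f := A) (c := 1) hcont (fun x s hs t ht => ?_)
    (by norm_num : (0 : ℝ) < 3 / 8) (fun t ht => ?_)
  · filter_upwards [this] with x hx t ht
    have h1 := (abs_lt.1 (hx t ht)).1
    have h2 := (abs_le.1 (hAθ x t ht.2)).2
    linarith
  · rcases le_total s t with h | h
    · exact (hle x s hs t ht h).trans (le_abs_self _)
    · rw [abs_sub_comm, abs_sub_comm (∫ τ in (0 : ℝ)..t, C * (δ + Q τ) / δ)]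
      exact (hle x t ht s hs h).trans (le_abs_self _)
  · filter_upwards [Metric.tendsto_nhds.1 (F.far_θ t) (1 / 16) (by norm_num)] with x hx
    rw [Real.dist_eq] at hx
    have := abs_sub_le (A x t) (F.θ x t) 1
    have := hAθ x t ht.2
    linarith

end NSFlow

/-! ### Entropy, dissipation and flux -/

/-- The convex function `w - log w - 1` entering the entropy density. -/
noncomputable def ent (w : ℝ) : ℝ := w - Real.log w - 1

lemma ent_nonneg {w : ℝ} (hw : 0 < w) : 0 ≤ ent w := by
  unfold ent; linarith [Real.log_le_sub_one_of_pos hw]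

lemma ent_le {w m : ℝ} (hm : 0 < m) (hw : m ≤ w) : ent w ≤ (w - 1) ^ 2 / m := by
  have hw0 := hm.trans_le hw
  have h1 := Real.one_sub_inv_le_log_of_pos hw0
  have h2 : (w - 1) ^ 2 / w ≤ (w - 1) ^ 2 / m := by gcongr
  have h3 : (w - 1) ^ 2 / w = w - 2 + w⁻¹ := by field_simp; ring
  unfold ent; linarith

lemma HasDerivAt.ent_comp {f : ℝ → ℝ} {f' x : ℝ} (hf : HasDerivAt f f' x) (h : 0 < f x) :
    HasDerivAt (fun y => ent (f y)) ((1 - (f x)⁻¹) * f') x := by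
  unfold ent
  refine ((hf.fun_sub (hf.log h.ne')).sub_const 1).congr_deriv ?_
  field_simp

lemma Continuous.ent_comp {X : Type*} [TopologicalSpace X] {f : X → ℝ} (hf : Continuous f)
    (h : ∀ x, 0 < f x) : Continuous fun y => ent (f y) := by
  unfold ent
  have := hf.log fun x => (h x).ne'
  fun_prop

namespace NSFlow

variable {μ κ R cv M m : ℝ} (F : NSFlow μ κ R cv M m)

/-- The effective stress `μ u_x / v - R θ / v`, whose spatial derivative is `u_t`. -/
noncomputable def σ (x t : ℝ) : ℝ := μ * (F.ux x t / F.v x t) - R * (F.θ x t / F.v x t)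

/-- The relative entropy density. -/
noncomputable def η (x t : ℝ) : ℝ := F.u x t ^ 2 / 2 + R * ent (F.v x t) + cv * ent (F.θ x t)

/-- The dissipation density `μ u_x² / (v θ) + κ θ_x² / (v θ²)`. -/
noncomputable def D (x t : ℝ) : ℝ :=
  μ * (F.ux x t ^ 2 / (F.v x t * F.θ x t)) + κ * (F.θx x t ^ 2 / (F.v x t * F.θ x t ^ 2))

/-- The time derivative of the entropy density, by the chain rule. -/
noncomputable def ηt (x t : ℝ) : ℝ :=
  F.u x t * F.ut x t + R * ((1 - (F.v x t)⁻¹) * F.ux x t)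
    + cv * ((1 - (F.θ x t)⁻¹) * F.θt x t)

/-- The entropy flux: `η_t + D` is its spatial derivative. -/
noncomputable def fl (x t : ℝ) : ℝ :=
  F.u x t * (F.σ x t + R) + κ * ((1 - (F.θ x t)⁻¹) * (F.θx x t / F.v x t))

lemma D_nonneg (x t : ℝ) : 0 ≤ F.D x t := by
  have := F.hμ; have := F.hκ; have := F.v_pos x t; have := F.θ_pos x t
  unfold D; positivity

lemma η_nonneg (x t : ℝ) : 0 ≤ F.η x t := by
  have := F.hR; have := F.hcv
  have := ent_nonneg (F.v_pos x t); have := ent_nonneg (F.θ_pos x t)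
  unfold η; positivity

lemma cσ (t : ℝ) : Continuous fun x => F.σ x t := by
  have := F.cv_x t; have := F.cθ_x t; have := F.cux t
  have h0 : ∀ x, F.v x t ≠ 0 := fun x => (F.v_pos x t).ne'
  simp only [σ]; fun_prop (disch := assumption)
lemma cD (t : ℝ) : Continuous fun x => F.D x t := by
  have := F.cv_x t; have := F.cθ_x t; have := F.cux t; have := F.cθx t
  have h0 : ∀ x, F.v x t * F.θ x t ≠ 0 := fun x => (mul_pos (F.v_pos x t) (F.θ_pos x t)).ne'
  have h1 : ∀ x, F.v x t * F.θ x t ^ 2 ≠ 0 :=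
    fun x => (mul_pos (F.v_pos x t) (pow_pos (F.θ_pos x t) 2)).ne'
  simp only [D]; fun_prop (disch := assumption)
lemma cη (t : ℝ) : Continuous fun x => F.η x t := by
  have := F.cu_x t
  have := (F.cv_x t).ent_comp fun x => F.v_pos x t
  have := (F.cθ_x t).ent_comp fun x => F.θ_pos x t
  simp only [η]; fun_prop
lemma tη (x : ℝ) : Continuous (F.η x) := by
  have := F.tu x
  have := (F.tv x).ent_comp fun t => F.v_pos x t
  have := (F.tθ x).ent_comp fun t => F.θ_pos x t
  unfold η; fun_prop
lemma cηt (t : ℝ) : Continuous fun x => F.ηt x t := by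
  have := F.cu_x t; have := F.cv_x t; have := F.cθ_x t; have := F.cux t
  have := F.cut t; have := F.cθt t
  have h0 : ∀ x, F.v x t ≠ 0 := fun x => (F.v_pos x t).ne'
  have h1 : ∀ x, F.θ x t ≠ 0 := fun x => (F.θ_pos x t).ne'
  simp only [ηt]; fun_prop (disch := assumption)
lemma mσ : Measurable fun p : ℝ × ℝ => F.σ p.1 p.2 := by
  have := F.jv.measurable; have := F.jθ.measurable; have := F.mux
  simp only [σ]; fun_prop
lemma mD : Measurable fun p : ℝ × ℝ => F.D p.1 p.2 := by
  have := F.jv.measurable; have := F.jθ.measurable; have := F.mux; have := F.mθx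
  simp only [D]; fun_prop
lemma mηt : Measurable fun p : ℝ × ℝ => F.ηt p.1 p.2 := by
  have := F.jv.measurable; have := F.jθ.measurable; have := F.mux; have := F.m_ut
  have := F.mθt; have := F.ju.measurable
  simp only [ηt]; fun_prop
lemma m_fl : Measurable fun p : ℝ × ℝ => F.fl p.1 p.2 := by
  have := F.jv.measurable; have := F.jθ.measurable; have := F.mσ; have := F.mθx
  have := F.ju.measurable
  simp only [fl]; fun_prop

lemma dη (x t : ℝ) (ht : 0 < t) : HasDerivAt (F.η x) (F.ηt x t) t := by
  have h1 := ((F.du x t ht).fun_pow 2).div_const 2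
  have h2 := ((F.dv x t ht).ent_comp (F.v_pos x t)).const_mul R
  have h3 := ((F.dθ x t ht).ent_comp (F.θ_pos x t)).const_mul cv
  refine ((h1.fun_add h2).fun_add h3).congr_deriv ?_
  simp only [ηt, ut, θt]
  ring

lemma dσ (x t : ℝ) : HasDerivAt (fun y => F.σ y t) (F.ut x t) x := by
  have h1 := ((F.hux x t).fun_div (F.hv x t) (F.v_pos x t).ne').const_mul μ
  have h2 := ((F.hθ x t).fun_div (F.hv x t) (F.v_pos x t).ne').const_mul R
  have h0 := F.v_pos x t
  refine (h1.fun_sub h2).congr_deriv ?_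
  simp only [ut]
  field_simp

lemma d_fl (x t : ℝ) : HasDerivAt (fun y => F.fl y t) (F.ηt x t + F.D x t) x := by
  have h1 := (F.hu x t).fun_mul ((F.dσ x t).add_const R)
  have h2 := (((F.hθ x t).fun_inv (F.θ_pos x t).ne').const_sub 1).fun_mul
    ((F.hθx x t).fun_div (F.hv x t) (F.v_pos x t).ne')
  have h0 := F.v_pos x t
  have h0' := F.θ_pos x t
  have hcv := F.hcv
  refine (h1.fun_add (h2.const_mul κ)).congr_deriv ?_
  simp only [ηt, θt, D, σ]
  field_simp
  ring

lemma integral_ηt (a b t : ℝ) :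
    ∫ x in a..b, F.ηt x t = F.fl b t - F.fl a t - ∫ x in a..b, F.D x t := by
  have c1 := F.cηt t
  have c2 := F.cD t
  have h := intervalIntegral.integral_eq_sub_of_hasDerivAt (a := a) (b := b)
    (fun x _ => F.d_fl x t) (Continuous.intervalIntegrable (by fun_prop) _ _)
  rw [intervalIntegral.integral_add (c1.intervalIntegrable _ _) (c2.intervalIntegrable _ _)] at h
  linarith

end NSFlow

/-! ### The energy estimate -/

/-- Integrability in time, pointwise in space and after integration over a bounded interval. -/
lemma time_integrable {g : ℝ → ℝ → ℝ} {Q : ℝ → ℝ} {T : ℝ} (hT : 0 ≤ T)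
    (hm : Measurable fun p : ℝ × ℝ => g p.1 p.2)
    (hQ : IntervalIntegrable Q volume 0 T)
    (hb : ∀ᵐ τ, τ ∈ Ioc 0 T → ∀ x, |g x τ| ≤ Q τ) :
    (∀ x, IntervalIntegrable (g x) volume 0 T) ∧
    ∀ a b, a ≤ b → IntervalIntegrable (fun τ => ∫ x in a..b, g x τ) volume 0 T := by
  have hQ' := (intervalIntegrable_iff_integrableOn_Ioc_of_le hT).1 hQ
  constructor
  · intro x
    rw [intervalIntegrable_iff_integrableOn_Ioc_of_le hT]
    refine Integrable.mono' hQ' ?_ ((ae_restrict_iff' measurableSet_Ioc).2 ?_)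
    · exact (hm.comp (measurable_prodMk_left (x := x))).aestronglyMeasurable
    · filter_upwards [hb] with τ h1 hτ using h1 hτ x
  · intro a b hab
    rw [intervalIntegrable_iff_integrableOn_Ioc_of_le hT]
    refine Integrable.mono' (hQ'.mul_const (b - a)) ?_
      ((ae_restrict_iff' measurableSet_Ioc).2 ?_)
    · have hm' : Measurable fun p : ℝ × ℝ => g p.2 p.1 := hm.comp measurable_swap
      simp_rw [intervalIntegral.integral_of_le hab]
      exact (hm'.stronglyMeasurable.integral_prod_right'
        (ν := volume.restrict (Ioc a b))).aestronglyMeasurable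
    · filter_upwards [hb] with τ h1 hτ
      have := intervalIntegral.norm_integral_le_of_norm_le_const (a := a) (b := b)
        (f := fun x => g x τ) (C := Q τ) (fun y _ => h1 hτ y)
      rwa [abs_of_nonneg (by linarith : (0 : ℝ) ≤ b - a)] at this

lemma intervalIntegrable_of_all {f : ℝ → ℝ} (h : ∀ T, 0 < T → IntervalIntegrable f volume 0 T)
    {s t : ℝ} (hs : 0 ≤ s) (ht : 0 ≤ t) : IntervalIntegrable f volume s t := by
  have hT : 0 < max s t + 1 := by positivity
  refine (h _ hT).mono_set ?_
  rw [uIcc_of_le hT.le]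
  exact ordConnected_Icc.uIcc_subset ⟨hs, by linarith [le_max_left s t]⟩
    ⟨ht, by linarith [le_max_right s t]⟩

namespace NSFlow

variable {μ κ R cv M m : ℝ} (F : NSFlow μ κ R cv M m)

/-- On `[0, T]` the stress, the dissipation and the entropy flux are bounded in space by a
time-integrable function; the last bound shows that the flux decays at infinity. -/
lemma ctrl' {T : ℝ} (hT : 0 < T) : ∃ Q : ℝ → ℝ, IntervalIntegrable Q volume 0 T ∧
    ∀ᵐ τ, τ ∈ Ioc 0 T → ∀ x, |F.σ x τ| ≤ Q τ ∧ |F.ux x τ / F.v x τ| ≤ Q τ ∧ |F.D x τ| ≤ Q τ ∧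
      |F.fl x τ| ≤ Q τ ∧ |F.fl x τ| ≤ Q τ * (|F.u x τ| + |1 - (F.θ x τ)⁻¹|) := by
  obtain ⟨N, Q, hN, hQi, hNb, -, hQ⟩ := F.ctrl hT
  obtain ⟨c, hc, hcv⟩ := F.v_lower hT
  obtain ⟨k, hk, hkθ⟩ := F.θ_lower hT
  have := F.hμ; have := F.hκ; have := F.hR
  set A : ℝ := 1 / c + (μ + R * N) / c + (μ / (c * k) + κ / (c * k ^ 2))
    + ((μ + R * N) / c + R + κ / c) with hA
  refine ⟨fun τ => A * (N + (1 + 1 / k)) * Q τ, hQi.const_mul _, ?_⟩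
  filter_upwards [hQ] with τ h1 hτ x
  have hq := (h1 hτ).2 x
  have hv := hcv x τ ⟨hτ.1.le, hτ.2⟩
  have hθ := hkθ x τ ⟨hτ.1.le, hτ.2⟩
  obtain ⟨-, hu, hθN⟩ := hNb x τ hτ.2
  have q1 : |F.ux x τ| ≤ Q τ := by
    nlinarith [abs_le_one_add_sq (F.ux x τ), sq_nonneg (F.θx x τ)]
  have q2 : |F.θx x τ| ≤ Q τ := by
    nlinarith [abs_le_one_add_sq (F.θx x τ), sq_nonneg (F.ux x τ)]
  have q3 : 1 ≤ Q τ := by nlinarith [sq_nonneg (F.θx x τ), sq_nonneg (F.ux x τ)]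
  have q4 : F.ux x τ ^ 2 ≤ Q τ := by nlinarith [sq_nonneg (F.θx x τ)]
  have q5 : F.θx x τ ^ 2 ≤ Q τ := by nlinarith [sq_nonneg (F.ux x τ)]
  have hQ0 : 0 ≤ Q τ := by linarith
  have vp := F.v_pos x τ; have θp := F.θ_pos x τ
  have b1 : |F.ux x τ / F.v x τ| ≤ Q τ / c := abs_div_le hc hv q1
  have b2 : |F.θ x τ / F.v x τ| ≤ N * Q τ / c := by
    refine abs_div_le hc hv ?_
    rw [abs_of_pos θp]; nlinarith
  have b3 : |F.θx x τ / F.v x τ| ≤ Q τ / c := abs_div_le hc hv q2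
  have b4 : |F.σ x τ| ≤ (μ + R * N) / c * Q τ := by
    simp only [σ]
    refine (abs_sub _ _).trans ?_
    rw [abs_mul, abs_mul, abs_of_pos F.hμ, abs_of_pos F.hR]
    calc _ ≤ μ * (Q τ / c) + R * (N * Q τ / c) := by gcongr
      _ = _ := by ring
  have b5 : |F.D x τ| ≤ (μ / (c * k) + κ / (c * k ^ 2)) * Q τ := by
    rw [abs_of_nonneg (F.D_nonneg x τ)]
    simp only [D]
    calc _ ≤ μ * (Q τ / (c * k)) + κ * (Q τ / (c * k ^ 2)) := by gcongr
      _ = _ := by ring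
  have b6 : |1 - (F.θ x τ)⁻¹| ≤ 1 + 1 / k := by
    refine (abs_sub _ _).trans ?_
    rw [abs_one, abs_of_pos (inv_pos.2 θp), one_div]
    gcongr
  have b7 : |F.fl x τ| ≤ ((μ + R * N) / c + R + κ / c) * Q τ *
      (|F.u x τ| + |1 - (F.θ x τ)⁻¹|) := by
    have e1 : |F.σ x τ + R| ≤ ((μ + R * N) / c + R) * Q τ := by
      refine (abs_add_le _ _).trans ?_
      rw [abs_of_pos F.hR, add_mul]
      nlinarith
    simp only [fl]
    refine (abs_add_le _ _).trans ?_
    rw [abs_mul, abs_mul, abs_mul, abs_of_pos F.hκ]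
    calc _ ≤ |F.u x τ| * (((μ + R * N) / c + R) * Q τ) +
          κ * (|1 - (F.θ x τ)⁻¹| * (Q τ / c)) := by gcongr
      _ ≤ |F.u x τ| * (((μ + R * N) / c + R) * Q τ) +
          κ * (|1 - (F.θ x τ)⁻¹| * (Q τ / c)) +
          (|F.u x τ| * (κ / c * Q τ) + |1 - (F.θ x τ)⁻¹| * (((μ + R * N) / c + R) * Q τ)) := by
          have : 0 ≤ (|F.u x τ| * (κ / c * Q τ) +
            |1 - (F.θ x τ)⁻¹| * (((μ + R * N) / c + R) * Q τ)) := by positivity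
          linarith
      _ = _ := by ring
  have hS : 1 ≤ N + (1 + 1 / k) := by
    have : 0 < 1 / k := by positivity
    linarith
  have mono : ∀ z, 0 ≤ z → z ≤ A → z * Q τ ≤ A * (N + (1 + 1 / k)) * Q τ := by
    intro z hz hzA
    gcongr
    nlinarith
  have p1 : 0 ≤ 1 / c := by positivity
  have p2 : 0 ≤ (μ + R * N) / c := by positivity
  have p3 : 0 ≤ (μ / (c * k) + κ / (c * k ^ 2)) := by positivity
  have p4 : 0 ≤ ((μ + R * N) / c + R + κ / c) := by positivity
  refine ⟨b4.trans (mono _ p2 (by linarith)), b1.trans ?_, b5.trans (mono _ p3 (by linarith)),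
    b7.trans ?_, b7.trans ?_⟩
  · refine le_trans (le_of_eq ?_) (mono _ p1 (by linarith)); ring
  · calc _ ≤ A * Q τ * (N + (1 + 1 / k)) := by gcongr; linarith
      _ = _ := by ring
  · refine mul_le_mul_of_nonneg_right (mono _ p4 (by linarith)) (by positivity)

lemma int_D {a b s t : ℝ} (hab : a ≤ b) (hs : 0 ≤ s) (ht : 0 ≤ t) :
    IntervalIntegrable (fun τ => ∫ x in a..b, F.D x τ) volume s t := by
  refine intervalIntegrable_of_all (fun T hT => ?_) hs ht
  obtain ⟨Q, hQ, h⟩ := F.ctrl' hT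
  exact (time_integrable hT.le F.mD hQ (h.mono fun τ h1 hτ x => (h1 hτ x).2.2.1)).2 a b hab

lemma int_σ (x : ℝ) {s t : ℝ} (hs : 0 ≤ s) (ht : 0 ≤ t) :
    IntervalIntegrable (F.σ x) volume s t := by
  refine intervalIntegrable_of_all (fun T hT => ?_) hs ht
  obtain ⟨Q, hQ, h⟩ := F.ctrl' hT
  exact (time_integrable hT.le F.mσ hQ (h.mono fun τ h1 hτ x => (h1 hτ x).1)).1 x

lemma int_σ' {a b s t : ℝ} (hab : a ≤ b) (hs : 0 ≤ s) (ht : 0 ≤ t) :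
    IntervalIntegrable (fun τ => ∫ x in a..b, F.σ x τ) volume s t := by
  refine intervalIntegrable_of_all (fun T hT => ?_) hs ht
  obtain ⟨Q, hQ, h⟩ := F.ctrl' hT
  exact (time_integrable hT.le F.mσ hQ (h.mono fun τ h1 hτ x => (h1 hτ x).1)).2 a b hab

lemma int_uxv (x : ℝ) {s t : ℝ} (hs : 0 ≤ s) (ht : 0 ≤ t) :
    IntervalIntegrable (fun τ => F.ux x τ / F.v x τ) volume s t := by
  refine intervalIntegrable_of_all (fun T hT => ?_) hs ht
  obtain ⟨Q, hQ, h⟩ := F.ctrl' hT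
  have := F.mux; have := F.jv.measurable
  exact (time_integrable (g := fun x τ => F.ux x τ / F.v x τ) hT.le (by fun_prop) hQ
    (h.mono fun τ h1 hτ x => (h1 hτ x).2.1)).1 x

lemma ηt_bound {T : ℝ} (hT : 0 < T) : ∃ C, ∀ x, ∀ τ ∈ Ioc 0 T, |F.ηt x τ| ≤ C * F.G x τ := by
  obtain ⟨N, Q, hN, hQi, hNb, -, hQ⟩ := F.ctrl hT
  obtain ⟨c, hc, hcv⟩ := F.v_lower hT
  obtain ⟨k, hk, hkθ⟩ := F.θ_lower hT
  obtain ⟨C, hC, hCb⟩ := F.dt_bound hc (by linarith : 0 ≤ N)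
  have hR := F.hR; have hcv' := F.hcv
  have inv : ∀ {w d : ℝ}, 0 < d → d ≤ w → |1 - w⁻¹| ≤ 1 + d⁻¹ := by
    intro w d hd hw
    refine (abs_sub _ _).trans ?_
    rw [abs_one, abs_of_pos (inv_pos.2 (hd.trans_le hw))]
    gcongr
  refine ⟨N * C + R * (1 + c⁻¹) + cv * ((1 + k⁻¹) * C), fun x τ hτ => ?_⟩
  have hv := hcv x τ ⟨hτ.1.le, hτ.2⟩
  have hθ := hkθ x τ ⟨hτ.1.le, hτ.2⟩
  obtain ⟨-, hu, hθN⟩ := hNb x τ hτ.2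
  obtain ⟨h1, h2⟩ := hCb x τ hv hθN
  have h3 := (F.G_bounds x τ).1
  have i1 := inv hc hv
  have i2 := inv hk hθ
  have hG := F.one_le_G x τ
  simp only [ηt]
  refine (abs_add_le _ _).trans ((add_le_add_left (abs_add_le _ _) _).trans ?_)
  rw [abs_mul, abs_mul, abs_mul, abs_mul, abs_mul, abs_of_pos hR, abs_of_pos hcv']
  calc _ ≤ N * (C * F.G x τ) + R * ((1 + c⁻¹) * F.G x τ) + cv * ((1 + k⁻¹) * (C * F.G x τ)) := by
        gcongr
    _ = _ := by ring

/-- The a-priori bound of the entropy, depending on the data only. -/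
noncomputable def _root_.E0 (R cv M m : ℝ) : ℝ := (1 / 2 + R / m + cv / m) * M ^ 2

lemma E0_nonneg (F : NSFlow μ κ R cv M m) : 0 ≤ E0 R cv M m := by
  have := F.hR; have := F.hcv; have := F.hm
  unfold E0; positivity

lemma init_entropy {a b : ℝ} (hab : a ≤ b) : ∫ x in a..b, F.η x 0 ≤ E0 R cv M m := by
  have hR := F.hR; have hcv := F.hcv; have hm := F.hm
  have c1 := F.cv_x 0; have c2 := F.cu_x 0; have c3 := F.cθ_x 0
  have h1 : ∫ x in a..b, F.η x 0 ≤ ∫ x in a..b, (1 / 2 * F.u x 0 ^ 2 +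
      R / m * (F.v x 0 - 1) ^ 2 + cv / m * (F.θ x 0 - 1) ^ 2) := by
    refine integral_le_of_continuous (F.cη 0) (by fun_prop) hab fun x _ => ?_
    have e1 := mul_le_mul_of_nonneg_left (ent_le hm (F.low_v x)) hR.le
    have e2 := mul_le_mul_of_nonneg_left (ent_le hm (F.low_θ x)) hcv.le
    simp only [η]
    rw [div_mul_eq_mul_div R, div_mul_eq_mul_div cv, mul_div_assoc, mul_div_assoc]
    linarith
  refine h1.trans ?_
  rw [intervalIntegral.integral_add, intervalIntegral.integral_add,
    intervalIntegral.integral_const_mul, intervalIntegral.integral_const_mul,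
    intervalIntegral.integral_const_mul]
  · have i1 := F.init_u a b hab
    have i2 := mul_le_mul_of_nonneg_left (F.init_v a b hab) (by positivity : 0 ≤ R / m)
    have i3 := mul_le_mul_of_nonneg_left (F.init_θ a b hab) (by positivity : 0 ≤ cv / m)
    unfold E0
    linarith
  all_goals exact Continuous.intervalIntegrable (by fun_prop) _ _

/-- The time-integrated entropy flux vanishes at infinity. -/
lemma flux_tendsto {T : ℝ} (hT : 0 < T) {s : ℕ → ℝ} (hs : Tendsto s atTop (cocompact ℝ)) :
    (∀ n, IntervalIntegrable (F.fl (s n)) volume 0 T) ∧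
    Tendsto (fun n => ∫ τ in (0 : ℝ)..T, F.fl (s n) τ) atTop (𝓝 0) := by
  obtain ⟨Q, hQ, h⟩ := F.ctrl' hT
  have hi := (time_integrable hT.le F.m_fl hQ (h.mono fun τ h1 hτ x => (h1 hτ x).2.2.2.1)).1
  refine ⟨fun n => hi _, ?_⟩
  have := intervalIntegral.tendsto_integral_filter_of_dominated_convergence (μ := volume)
    (a := 0) (b := T) (F := fun n τ => F.fl (s n) τ) (f := fun _ => (0 : ℝ)) (l := atTop) Q ?_ ?_
    hQ ?_
  · simpa using this
  · exact Eventually.of_forall fun n =>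
      (F.m_fl.comp (measurable_prodMk_left (x := s n))).aestronglyMeasurable
  · refine Eventually.of_forall fun n => ?_
    rw [uIoc_of_le hT.le]
    filter_upwards [h] with τ h1 hτ using (h1 hτ _).2.2.2.1
  · rw [uIoc_of_le hT.le]
    filter_upwards [h] with τ h1 hτ
    refine squeeze_zero_norm (fun n => (h1 hτ (s n)).2.2.2.2) ?_
    have l1 := ((F.far_u τ).comp hs).abs
    have l2 := ((((F.far_θ τ).comp hs).inv₀ one_ne_zero).const_sub 1).abs
    have := (l1.add l2).const_mul (Q τ)
    simpa [Function.comp_def] using this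

/-- The basic energy estimate: the entropy balance on `[-n, n]`, in which the boundary fluxes
disappear as `n → ∞`. -/
lemma energy {a b t : ℝ} (hab : a ≤ b) (ht : 0 < t) :
    (∫ x in a..b, F.η x t) + ∫ τ in (0 : ℝ)..t, ∫ x in a..b, F.D x τ ≤ E0 R cv M m := by
  have l1 : Tendsto (fun n : ℕ => (n : ℝ)) atTop (cocompact ℝ) :=
    tendsto_natCast_atTop_atTop.mono_right atTop_le_cocompact
  have l2 : Tendsto (fun n : ℕ => -(n : ℝ)) atTop (cocompact ℝ) :=
    (tendsto_neg_atTop_atBot.comp tendsto_natCast_atTop_atTop).mono_right atBot_le_cocompact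
  obtain ⟨i1, f1⟩ := F.flux_tendsto ht l1
  obtain ⟨i2, f2⟩ := F.flux_tendsto ht l2
  have f3 := (f1.sub f2).const_add (E0 R cv M m)
  rw [sub_zero, add_zero] at f3
  refine ge_of_tendsto f3 ?_
  obtain ⟨n0, hn0⟩ := exists_nat_ge (max |a| |b|)
  filter_upwards [eventually_ge_atTop n0] with n hn
  have hn' : max |a| |b| ≤ (n : ℝ) := hn0.trans (by exact_mod_cast hn)
  have ha : -(n : ℝ) ≤ a := by
    have := (le_max_left |a| |b|).trans hn'; linarith [neg_abs_le a]
  have hb : b ≤ (n : ℝ) := by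
    have := (le_max_right |a| |b|).trans hn'; linarith [le_abs_self b]
  have hnn : -(n : ℝ) ≤ n := by linarith
  obtain ⟨C, hC⟩ := F.ηt_bound ht
  obtain ⟨-, hr⟩ := F.rect ht F.tη F.cη F.dη F.mηt F.cηt hnn le_rfl ht.le le_rfl
    (fun x _ τ hτ => hC x τ hτ)
  simp_rw [F.integral_ηt] at hr
  have iD := F.int_D hnn le_rfl ht.le
  rw [intervalIntegral.integral_sub ((i1 n).sub (i2 n)) iD,
    intervalIntegral.integral_sub (i1 n) (i2 n)] at hr
  have k1 := F.init_entropy hnn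
  have k2 := integral_sub_interval_le (F.cη t) (fun x => F.η_nonneg x t) ha hab hb
  have k3 : ∫ τ in (0 : ℝ)..t, ∫ x in a..b, F.D x τ ≤
      ∫ τ in (0 : ℝ)..t, ∫ x in (-(n : ℝ))..n, F.D x τ :=
    intervalIntegral.integral_mono_on ht.le (F.int_D hab le_rfl ht.le) iD fun τ _ =>
      integral_sub_interval_le (F.cD τ) (fun x => F.D_nonneg x τ) ha hab hb
  linarith

end NSFlow

/-! ### The representation of the volume -/

namespace NSFlow

variable {μ κ R cv M m : ℝ} (F : NSFlow μ κ R cv M m)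

lemma energy' {a b t : ℝ} (hab : a ≤ b) (ht : 0 ≤ t) : ∫ x in a..b, F.η x t ≤ E0 R cv M m := by
  rcases ht.eq_or_lt with rfl | ht
  · exact F.init_entropy hab
  · have h1 := F.energy hab ht
    have h2 : 0 ≤ ∫ τ in (0 : ℝ)..t, ∫ x in a..b, F.D x τ :=
      intervalIntegral.integral_nonneg ht.le fun τ _ =>
        intervalIntegral.integral_nonneg hab fun x _ => F.D_nonneg x τ
    linarith

lemma integral_abs_u_le {a b t : ℝ} (hab : a ≤ b) (ht : 0 ≤ t) :
    ∫ x in a..b, |F.u x t| ≤ (b - a) / 2 + E0 R cv M m := by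
  have h1 := F.energy' hab ht
  have c1 := F.cu_x t
  have c2 := F.cη t
  have h2 : ∫ x in a..b, |F.u x t| ≤ ∫ x in a..b, (1 / 2 + F.η x t) := by
    refine integral_le_of_continuous (by fun_prop) (by fun_prop) hab fun x _ => ?_
    have := mul_nonneg F.hR.le (ent_nonneg (F.v_pos x t))
    have := mul_nonneg F.hcv.le (ent_nonneg (F.θ_pos x t))
    simp only [η]
    rw [abs_le]; constructor <;> nlinarith [sq_nonneg (F.u x t - 1), sq_nonneg (F.u x t + 1)]
  rw [intervalIntegral.integral_add (continuous_const.intervalIntegrable _ _)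
    (c2.intervalIntegrable _ _), intervalIntegral.integral_const] at h2
  simp only [smul_eq_mul] at h2
  linarith

/-- The weighted momentum to the right of `x` in the window `[a, a + 2]`: the weight is `1` on
`[x, a + 1]` and decreases linearly to `0` on `[a + 1, a + 2]`. -/
noncomputable def B (a x t : ℝ) : ℝ :=
  (∫ y in x..(a + 1), F.u y t) + ∫ y in (a + 1)..(a + 2), (a + 2 - y) * F.u y t

/-- The time integral of the mean stress over `[a + 1, a + 2]`. -/
noncomputable def Y (a t : ℝ) : ℝ := ∫ τ in (0 : ℝ)..t, ∫ x in (a + 1)..(a + 2), F.σ x τ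

/-- The propagator `exp ((Y(t) - Y(s)) / μ)`. -/
noncomputable def Z (a s t : ℝ) : ℝ := Real.exp ((F.Y a t - F.Y a s) / μ)

lemma abs_B_le {a x t : ℝ} (hx : x ∈ Icc a (a + 1)) (ht : 0 ≤ t) :
    |F.B a x t| ≤ 1 + E0 R cv M m := by
  have c1 := F.cu_x t
  have h1 : |∫ y in x..(a + 1), F.u y t| ≤ ∫ y in a..(a + 1), |F.u y t| :=
    (intervalIntegral.abs_integral_le_integral_abs hx.2).trans
      (integral_sub_interval_le (by fun_prop) (fun y => abs_nonneg _) hx.1 hx.2 le_rfl)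
  have h2 : |∫ y in (a + 1)..(a + 2), (a + 2 - y) * F.u y t| ≤
      ∫ y in (a + 1)..(a + 2), |F.u y t| := by
    refine (intervalIntegral.abs_integral_le_integral_abs (by linarith)).trans
      (integral_le_of_continuous (by fun_prop) (by fun_prop) (by linarith) fun y hy => ?_)
    rw [abs_mul, abs_of_nonneg (by linarith [hy.2])]
    exact mul_le_of_le_one_left (abs_nonneg _) (by linarith [hy.1])
  have h3 := F.integral_abs_u_le (by linarith : a ≤ a + 2) ht
  rw [← intervalIntegral.integral_add_adjacent_intervals (b := a + 1)
    (Continuous.intervalIntegrable (by fun_prop) _ _)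
    (Continuous.intervalIntegrable (by fun_prop) _ _)] at h3
  unfold B
  have := abs_add_le (∫ y in x..(a + 1), F.u y t) (∫ y in (a + 1)..(a + 2), (a + 2 - y) * F.u y t)
  linarith

/-- The momentum equation integrated in time, and in space against the weight of `B`. -/
lemma momentum {a x t : ℝ} (hx : x ∈ Icc a (a + 1)) (ht : 0 < t) :
    F.B a x t - F.B a x 0 = F.Y a t - ∫ τ in (0 : ℝ)..t, F.σ x τ := by
  obtain ⟨N, Q, hN, hQi, hNb, -, hQ⟩ := F.ctrl ht
  obtain ⟨c, hc, hcv⟩ := F.v_lower ht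
  obtain ⟨C, hC, hCb⟩ := F.dt_bound hc (by linarith : 0 ≤ N)
  have hb : ∀ x, ∀ τ ∈ Ioc 0 t, |F.ut x τ| ≤ C * F.G x τ := fun x τ hτ =>
    (hCb x τ (hcv x τ ⟨hτ.1.le, hτ.2⟩) (hNb x τ hτ.2).2.2).1
  have r1 := (F.rect (g := F.ut) ht F.tu F.cu_x F.du F.m_ut F.cut hx.2 le_rfl ht.le le_rfl
    (fun y _ τ hτ => hb y τ hτ)).2
  have r2 := (F.rect (f := fun y τ => (a + 2 - y) * F.u y τ)
    (g := fun y τ => (a + 2 - y) * F.ut y τ) (C := C) (a := a + 1) (b := a + 2) ht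
    (fun y => by have := F.tu y; fun_prop) (fun τ => by have := F.cu_x τ; fun_prop)
    (fun y τ hτ => (F.du y τ hτ).const_mul _) (by have := F.m_ut; fun_prop)
    (fun τ => by have := F.cut τ; fun_prop) (by linarith) le_rfl ht.le le_rfl
    (fun y hy τ hτ => by
      rw [abs_mul, abs_of_nonneg (by linarith [hy.2])]
      exact (mul_le_of_le_one_left (abs_nonneg _) (by linarith [hy.1])).trans (hb y τ hτ))).2
  have e1 : ∀ τ, ∫ y in x..(a + 1), F.ut y τ = F.σ (a + 1) τ - F.σ x τ := fun τ =>
    intervalIntegral.integral_eq_sub_of_hasDerivAt (fun y _ => F.dσ y τ)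
      ((F.cut τ).intervalIntegrable _ _)
  have e2 : ∀ τ, ∫ y in (a + 1)..(a + 2), (a + 2 - y) * F.ut y τ =
      (∫ y in (a + 1)..(a + 2), F.σ y τ) - F.σ (a + 1) τ := by
    intro τ
    have c1 := F.cut τ
    have c2 := F.cσ τ
    have := intervalIntegral.integral_eq_sub_of_hasDerivAt (a := a + 1) (b := a + 2)
      (f := fun y => (a + 2 - y) * F.σ y τ)
      (f' := fun y => (a + 2 - y) * F.ut y τ - F.σ y τ)
      (fun y _ => (((hasDerivAt_id' y).const_sub (a + 2)).fun_mul (F.dσ y τ)).congr_deriv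
        (by ring))
      (Continuous.intervalIntegrable (by fun_prop) _ _)
    rw [intervalIntegral.integral_sub (Continuous.intervalIntegrable (by fun_prop) _ _)
      (Continuous.intervalIntegrable (by fun_prop) _ _)] at this
    have e : a + 2 - (a + 1) = 1 := by ring
    simp only [sub_self, zero_mul, e, one_mul] at this
    linarith
  simp_rw [e1] at r1
  simp_rw [e2] at r2
  rw [intervalIntegral.integral_sub (F.int_σ _ le_rfl ht.le) (F.int_σ _ le_rfl ht.le)] at r1
  rw [intervalIntegral.integral_sub (F.int_σ' (by linarith) le_rfl ht.le)
    (F.int_σ _ le_rfl ht.le)] at r2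
  unfold B Y
  linarith

lemma cont_ratio (x : ℝ) : Continuous fun τ => F.θ x τ / F.v x τ :=
  (F.tθ x).div (F.tv x) fun τ => ne_of_gt (F.v_pos x τ)

/-- The momentum identity with `u_x / v` replaced by `(log v)_t`. -/
lemma log_volume {a x t : ℝ} (hx : x ∈ Icc a (a + 1)) (ht : 0 ≤ t) :
    μ * (Real.log (F.v x t) - Real.log (F.v x 0)) = F.Y a t - (F.B a x t - F.B a x 0)
      + R * ∫ τ in (0 : ℝ)..t, F.θ x τ / F.v x τ := by
  rcases ht.eq_or_lt with rfl | ht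
  · simp [Y]
  have h1 := F.momentum hx ht
  have h2 : ∫ τ in (0 : ℝ)..t, F.ux x τ / F.v x τ = Real.log (F.v x t) - Real.log (F.v x 0) :=
    intervalIntegral.integral_eq_sub_of_hasDerivAt_of_le ht.le
      ((F.tv x).log fun τ => (F.v_pos x τ).ne').continuousOn
      (fun τ hτ => (F.dv x τ hτ.1).log (F.v_pos x τ).ne') (F.int_uxv x le_rfl ht.le)
  have h3 : ∫ τ in (0 : ℝ)..t, F.σ x τ = μ * (∫ τ in (0 : ℝ)..t, F.ux x τ / F.v x τ)
      - R * ∫ τ in (0 : ℝ)..t, F.θ x τ / F.v x τ := by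
    rw [← intervalIntegral.integral_const_mul, ← intervalIntegral.integral_const_mul,
      ← intervalIntegral.integral_sub ((F.int_uxv x le_rfl ht.le).const_mul μ)
      (((F.cont_ratio x).intervalIntegrable _ _).const_mul R)]
    rfl
  rw [← h2]
  linarith

lemma cY (a : ℝ) {t : ℝ} (ht : 0 ≤ t) : ContinuousOn (F.Y a) (Icc 0 t) := by
  have := intervalIntegral.continuousOn_primitive_interval'
    (F.int_σ' (by linarith : a + 1 ≤ a + 2) le_rfl ht) left_mem_uIcc
  rwa [uIcc_of_le ht] at this

lemma cZ (a : ℝ) {t : ℝ} (ht : 0 ≤ t) : ContinuousOn (fun s => F.Z a s t) (Icc 0 t) := by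
  have := F.cY a ht
  unfold Z
  exact Real.continuous_exp.comp_continuousOn ((continuousOn_const.sub this).div_const μ)

lemma Z_pos (a s t : ℝ) : 0 < F.Z a s t := Real.exp_pos _

lemma int_Zθ (a x : ℝ) {t : ℝ} (ht : 0 ≤ t) :
    IntervalIntegrable (fun s => F.Z a s t * F.θ x s) volume 0 t := by
  refine ContinuousOn.intervalIntegrable ?_
  rw [uIcc_of_le ht]
  exact (F.cZ a ht).mul (F.tθ x).continuousOn

/-- The propagator representation of the volume, with the momentum factor `b` and the initial
volume already estimated. -/
lemma volume_repr {a x t b V : ℝ} (hb : b = Real.exp (2 * (1 + E0 R cv M m) / μ))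
    (hV : F.v x 0 ≤ V) (hx : x ∈ Icc a (a + 1)) (ht : 0 ≤ t) :
    m / b * F.Z a 0 t + R / μ * (m / V / b ^ 2) * (∫ s in (0 : ℝ)..t, F.Z a s t * F.θ x s)
      ≤ F.v x t ∧
    F.v x t ≤ V * b * F.Z a 0 t +
      R / μ * (V / m * b ^ 2) * ∫ s in (0 : ℝ)..t, F.Z a s t * F.θ x s := by
  have hμ := F.hμ; have hR := F.hR; have hm := F.hm
  have hb0 : 0 < b := hb ▸ Real.exp_pos _
  have hv0 := F.low_v x
  have hV0 : 0 < V := (hm.trans_le hv0).trans_le hV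
  have hvp : ∀ s, 0 < F.v x s := F.v_pos x
  -- `E` is the exponential of the accumulated pressure; it solves `E' = (R θ / μ v) E`, and `E / v` is
  -- free of the pressure, which turns the formula for `v` into one that is linear in `θ`
  set J : ℝ → ℝ := fun s => ∫ τ in (0 : ℝ)..s, F.θ x τ / F.v x τ with hJ
  set E : ℝ → ℝ := fun s => Real.exp (R / μ * J s) with hE
  have hdJ : ∀ s, HasDerivAt J (F.θ x s / F.v x s) s := fun s =>
    intervalIntegral.integral_hasDerivAt_right ((F.cont_ratio x).intervalIntegrable _ _)
      ((F.cont_ratio x).stronglyMeasurableAtFilter _ _) (F.cont_ratio x).continuousAt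
  have hdE : ∀ s, HasDerivAt E (R / μ * (F.θ x s * E s / F.v x s)) s := by
    intro s
    refine ((hdJ s).const_mul (R / μ)).exp.congr_deriv ?_
    simp only [hE]; ring
  have hEp : ∀ s, 0 < E s := fun s => Real.exp_pos _
  have cE : Continuous E := continuous_iff_continuousAt.2 fun s => (hdE s).continuousAt
  have cI : Continuous fun s => F.θ x s * E s / F.v x s :=
    ((F.tθ x).mul cE).div (F.tv x) fun s => (hvp s).ne'
  have hE0 : E 0 = 1 := by simp [hE, hJ]
  have hEt : E t = 1 + R / μ * ∫ s in (0 : ℝ)..t, F.θ x s * E s / F.v x s := by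
    have := intervalIntegral.integral_eq_sub_of_hasDerivAt (a := 0) (b := t) (fun s _ => hdE s)
      ((cI.const_mul (R / μ)).intervalIntegrable _ _)
    rw [intervalIntegral.integral_const_mul, hE0] at this
    linarith
  have hlog : ∀ s, 0 ≤ s → F.v x s = F.v x 0 * F.Z a 0 s *
      Real.exp (-(F.B a x s - F.B a x 0) / μ) * E s := by
    intro s hs
    have h := F.log_volume hx hs
    have h' : Real.log (F.v x s) = Real.log (F.v x 0) + (F.Y a s - F.Y a 0) / μ
        + -(F.B a x s - F.B a x 0) / μ + R / μ * J s := by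
      have : F.Y a 0 = 0 := by simp [Y]
      rw [this]
      field_simp
      linarith
    rw [← Real.exp_log (hvp s), h', Real.exp_add, Real.exp_add, Real.exp_add,
      Real.exp_log (hvp 0)]
    rfl
  have hB : ∀ s, 0 ≤ s → b⁻¹ ≤ Real.exp (-(F.B a x s - F.B a x 0) / μ) ∧
      Real.exp (-(F.B a x s - F.B a x 0) / μ) ≤ b := by
    intro s hs
    have h1 := abs_le.1 (F.abs_B_le hx hs)
    have h2 := abs_le.1 (F.abs_B_le hx le_rfl)
    rw [hb, ← Real.exp_neg, Real.exp_le_exp, Real.exp_le_exp, ← neg_div,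
      div_le_div_iff_of_pos_right hμ, div_le_div_iff_of_pos_right hμ]
    constructor <;> linarith
  have hcomp : ∀ s, F.Z a 0 t = F.Z a 0 s * F.Z a s t := by
    intro s
    simp only [Z]
    rw [← Real.exp_add]; congr 1; ring
  obtain ⟨hB1, hB2⟩ := hB t ht
  have hZ := F.Z_pos a 0 t
  set q := Real.exp (-(F.B a x t - F.B a x 0) / μ) with hq
  have hq0 : 0 < q := Real.exp_pos _
  -- the integrand differs from the propagator only by momentum factors `q / r`
  have hpt : ∀ s ∈ Icc 0 t, (m / V / b ^ 2) * (F.Z a s t * F.θ x s) ≤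
      F.v x 0 * F.Z a 0 t * q * (F.θ x s * E s / F.v x s) ∧
      F.v x 0 * F.Z a 0 t * q * (F.θ x s * E s / F.v x s) ≤
      (V / m * b ^ 2) * (F.Z a s t * F.θ x s) := by
    intro s hs
    obtain ⟨g1, g2⟩ := hB s hs.1
    set r := Real.exp (-(F.B a x s - F.B a x 0) / μ) with hr
    have hr0 : 0 < r := Real.exp_pos _
    have e : F.v x 0 * F.Z a 0 t * q * (F.θ x s * E s / F.v x s) =
        q / r * (F.Z a s t * F.θ x s) := by
      have := F.Z_pos a 0 s
      have := hEp s
      have := hvp 0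
      rw [hlog s hs.1, ← hr, hcomp s]
      field_simp
    have hp : 0 < F.Z a s t * F.θ x s := mul_pos (F.Z_pos a s t) (F.θ_pos x s)
    rw [e]
    have hmV : m / V ≤ 1 := by rw [div_le_one hV0]; linarith
    have hVm : 1 ≤ V / m := by rw [one_le_div hm]; linarith
    constructor
    · refine mul_le_mul_of_nonneg_right ?_ hp.le
      calc m / V / b ^ 2 ≤ 1 / b ^ 2 := by gcongr
        _ = b⁻¹ / b := by field_simp
        _ ≤ q / r := by gcongr
    · refine mul_le_mul_of_nonneg_right ?_ hp.le
      calc q / r ≤ b / b⁻¹ := by gcongr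
        _ = 1 * b ^ 2 := by field_simp
        _ ≤ V / m * b ^ 2 := by gcongr
  have iZ := F.int_Zθ a x ht
  have iI : IntervalIntegrable (fun s => F.v x 0 * F.Z a 0 t * q * (F.θ x s * E s / F.v x s))
      volume 0 t := (cI.intervalIntegrable _ _).const_mul _
  have hlow := intervalIntegral.integral_mono_on ht (iZ.const_mul (m / V / b ^ 2)) iI
    fun s hs => (hpt s hs).1
  have hup := intervalIntegral.integral_mono_on ht iI (iZ.const_mul (V / m * b ^ 2))
    fun s hs => (hpt s hs).2
  rw [intervalIntegral.integral_const_mul, intervalIntegral.integral_const_mul] at hlow hup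
  have hvt : F.v x t = F.v x 0 * F.Z a 0 t * q + R / μ * (F.v x 0 * F.Z a 0 t * q *
      ∫ s in (0 : ℝ)..t, F.θ x s * E s / F.v x s) := by
    rw [hlog t ht, hEt]; ring
  have hRμ : 0 ≤ R / μ := by positivity
  have hv00 := hvp 0
  have t1 : m / b * F.Z a 0 t ≤ F.v x 0 * F.Z a 0 t * q := by
    calc m / b * F.Z a 0 t = m * F.Z a 0 t * b⁻¹ := by ring
      _ ≤ _ := by gcongr
  have t2 : F.v x 0 * F.Z a 0 t * q ≤ V * b * F.Z a 0 t := by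
    calc F.v x 0 * F.Z a 0 t * q ≤ V * F.Z a 0 t * b := by gcongr
      _ = _ := by ring
  rw [hvt, mul_assoc (R / μ), mul_assoc (R / μ)]
  exact ⟨add_le_add t1 (mul_le_mul_of_nonneg_left hlow hRμ),
    add_le_add t2 (mul_le_mul_of_nonneg_left hup hRμ)⟩

lemma v0_le (x : ℝ) : F.v x 0 ≤ 2 + 3 * M ^ 2 := by
  have h := F.init_v.sup F.init_vx (fun z => (F.hv z 0).sub_const 1) (F.cvx 0) x
  have := abs_le_one_add_sq (F.v x 0 - 1)
  linarith [le_abs_self (F.v x 0 - 1)]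

end NSFlow

/-- Two-sided control of the volume by the propagator, with constants depending on the data
only. -/
lemma exists_repr {μ κ R cv M m : ℝ} (hμ : 0 < μ) (hR : 0 < R) (hm : 0 < m) :
    ∃ c C : ℝ, 0 < c ∧ 0 < C ∧ ∀ (F : NSFlow μ κ R cv M m) (a x t : ℝ), x ∈ Icc a (a + 1) →
      0 ≤ t →
      c * (F.Z a 0 t + ∫ s in (0 : ℝ)..t, F.Z a s t * F.θ x s) ≤ F.v x t ∧
      F.v x t ≤ C * (F.Z a 0 t + ∫ s in (0 : ℝ)..t, F.Z a s t * F.θ x s) := by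
  set b := Real.exp (2 * (1 + E0 R cv M m) / μ) with hb
  have hb0 : 0 < b := Real.exp_pos _
  set V : ℝ := 2 + 3 * M ^ 2 with hV
  have hV0 : 0 < V := by positivity
  refine ⟨min (m / b) (R / μ * (m / V / b ^ 2)), max (V * b) (R / μ * (V / m * b ^ 2)),
    lt_min (by positivity) (by positivity), lt_max_of_lt_left (by positivity), ?_⟩
  intro F a x t hx ht
  obtain ⟨h1, h2⟩ := F.volume_repr hb (F.v0_le x) hx ht
  have hZ := F.Z_pos a 0 t
  have hI : 0 ≤ ∫ s in (0 : ℝ)..t, F.Z a s t * F.θ x s :=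
    intervalIntegral.integral_nonneg ht fun s _ => (mul_pos (F.Z_pos a s t) (F.θ_pos x s)).le
  rw [mul_add, mul_add]
  constructor
  · refine le_trans (add_le_add ?_ ?_) h1
    · exact mul_le_mul_of_nonneg_right (min_le_left _ _) hZ.le
    · exact mul_le_mul_of_nonneg_right (min_le_right _ _) hI
  · refine h2.trans (add_le_add ?_ ?_)
    · exact mul_le_mul_of_nonneg_right (le_max_left _ _) hZ.le
    · exact mul_le_mul_of_nonneg_right (le_max_right _ _) hI

/-! ### Estimates at a fixed time in a unit window -/

lemma half_sub_one_le_ent {w : ℝ} (hw : 0 < w) : w / 2 - 1 ≤ ent w := by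
  have h1 := Real.log_le_sub_one_of_pos (half_pos hw)
  rw [Real.log_div hw.ne' two_ne_zero] at h1
  have := Real.log_two_lt_d9
  unfold ent; linarith

/-- Consequences of an entropy bound `K` on a unit interval: an upper bound of the mean, a lower
bound of the mean of the logarithm, and (by Jensen) a lower bound of the mean. -/
lemma entropy_window {w : ℝ → ℝ} {a K : ℝ} (hw : Continuous w) (hp : ∀ x, 0 < w x)
    (hK : ∫ x in a..(a + 1), ent (w x) ≤ K) :
    ∫ x in a..(a + 1), w x ≤ 2 * K + 2 ∧ -(K + 1) ≤ ∫ x in a..(a + 1), Real.log (w x) ∧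
    Real.exp (-(K + 1)) ≤ ∫ x in a..(a + 1), w x := by
  have ce := hw.ent_comp hp
  have cl : Continuous fun x => Real.log (w x) := hw.log fun x => (hp x).ne'
  have hab : a ≤ a + 1 := by linarith
  have h1 : ∫ x in a..(a + 1), (w x / 2 - 1) ≤ ∫ x in a..(a + 1), ent (w x) :=
    integral_le_of_continuous (by fun_prop) ce hab fun x _ => half_sub_one_le_ent (hp x)
  have h2 : ∫ x in a..(a + 1), (-ent (w x) - 1) ≤ ∫ x in a..(a + 1), Real.log (w x) :=
    integral_le_of_continuous (by fun_prop) cl hab fun x _ => by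
      have := hp x
      unfold ent; linarith
  rw [intervalIntegral.integral_sub (Continuous.intervalIntegrable (by fun_prop) _ _)
    (Continuous.intervalIntegrable (by fun_prop) _ _)] at h1 h2
  simp only [intervalIntegral.integral_div, intervalIntegral.integral_neg,
    intervalIntegral.integral_const, add_sub_cancel_left, smul_eq_mul, mul_one] at h1 h2
  have h3 : -(K + 1) ≤ ∫ x in a..(a + 1), Real.log (w x) := by linarith
  refine ⟨by linarith, h3, ?_⟩
  set L := ∫ x in a..(a + 1), Real.log (w x) with hL
  refine (Real.exp_le_exp.2 h3).trans ?_
  have h4 : ∫ x in a..(a + 1), Real.exp L * (1 - L + Real.log (w x)) ≤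
      ∫ x in a..(a + 1), w x := by
    refine integral_le_of_continuous (by fun_prop) hw hab fun x _ => ?_
    have := Real.add_one_le_exp (Real.log (w x) - L)
    calc Real.exp L * (1 - L + Real.log (w x)) ≤ Real.exp L * Real.exp (Real.log (w x) - L) := by
          gcongr; linarith
      _ = w x := by rw [← Real.exp_add, add_sub_cancel, Real.exp_log (hp x)]
  refine le_trans (le_of_eq ?_) h4
  rw [intervalIntegral.integral_const_mul,
    intervalIntegral.integral_add (Continuous.intervalIntegrable (by fun_prop) _ _)
    (Continuous.intervalIntegrable (by fun_prop) _ _), ← hL]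
  simp

/-- By the Cauchy-Schwarz inequality the mean of `1 / w` is at least the inverse of the mean. -/
lemma integral_inv_ge {w : ℝ → ℝ} {a α : ℝ} (hw : Continuous w) (hp : ∀ x, 0 < w x) (hα : 0 < α)
    (h : ∫ x in a..(a + 1), w x ≤ α) : 1 / α ≤ ∫ x in a..(a + 1), (w x)⁻¹ := by
  have hi : Continuous fun x => (w x)⁻¹ := hw.inv₀ fun x => (hp x).ne'
  have h1 : ∫ x in a..(a + 1), (2 / α - 1 / α ^ 2 * w x) ≤ ∫ x in a..(a + 1), (w x)⁻¹ := by
    refine integral_le_of_continuous (by fun_prop) hi (by linarith) fun x _ => ?_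
    have hx := hp x
    have : (w x)⁻¹ - (2 / α - 1 / α ^ 2 * w x) = (w x - α) ^ 2 / (w x * α ^ 2) := by
      field_simp; ring
    have h0 : 0 ≤ (w x - α) ^ 2 / (w x * α ^ 2) := by positivity
    linarith
  rw [intervalIntegral.integral_sub (Continuous.intervalIntegrable (by fun_prop) _ _)
    (Continuous.intervalIntegrable (by fun_prop) _ _),
    intervalIntegral.integral_const_mul] at h1
  simp only [intervalIntegral.integral_const, add_sub_cancel_left, smul_eq_mul, one_mul] at h1
  have h2 : 1 / α ^ 2 * ∫ x in a..(a + 1), w x ≤ 1 / α ^ 2 * α := by gcongr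
  have h3 : 1 / α ^ 2 * α = 1 / α := by field_simp
  have h4 : 2 / α = 1 / α + 1 / α := by ring
  linarith

namespace NSFlow

variable {μ κ R cv M m : ℝ} (F : NSFlow μ κ R cv M m)

/-- The dissipation in the unit window starting at `a`. -/
noncomputable def d (a s : ℝ) : ℝ := ∫ x in a..(a + 1), F.D x s

lemma d_nonneg (a s : ℝ) : 0 ≤ F.d a s :=
  intervalIntegral.integral_nonneg (by linarith) fun x _ => F.D_nonneg x s

lemma ent_window_v (a : ℝ) {s : ℝ} (hs : 0 ≤ s) :
    ∫ x in a..(a + 1), ent (F.v x s) ≤ E0 R cv M m / R := by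
  have hR := F.hR
  have c1 := (F.cv_x s).ent_comp fun x => F.v_pos x s
  have h1 : ∫ x in a..(a + 1), ent (F.v x s) ≤ ∫ x in a..(a + 1), F.η x s / R := by
    refine integral_le_of_continuous c1 ((F.cη s).div_const R) (by linarith) fun x _ => ?_
    rw [le_div_iff₀ hR]
    have := mul_nonneg F.hcv.le (ent_nonneg (F.θ_pos x s))
    simp only [η]
    nlinarith [sq_nonneg (F.u x s)]
  rw [intervalIntegral.integral_div] at h1
  have := F.energy' (by linarith : a ≤ a + 1) hs
  exact h1.trans (by gcongr)

lemma ent_window_θ (a : ℝ) {s : ℝ} (hs : 0 ≤ s) :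
    ∫ x in a..(a + 1), ent (F.θ x s) ≤ E0 R cv M m / cv := by
  have hcv := F.hcv
  have c1 := (F.cθ_x s).ent_comp fun x => F.θ_pos x s
  have h1 : ∫ x in a..(a + 1), ent (F.θ x s) ≤ ∫ x in a..(a + 1), F.η x s / cv := by
    refine integral_le_of_continuous c1 ((F.cη s).div_const cv) (by linarith) fun x _ => ?_
    rw [le_div_iff₀ hcv]
    have := mul_nonneg F.hR.le (ent_nonneg (F.v_pos x s))
    simp only [η]
    nlinarith [sq_nonneg (F.u x s)]
  rw [intervalIntegral.integral_div] at h1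
  have := F.energy' (by linarith : a ≤ a + 1) hs
  exact h1.trans (by gcongr)

lemma heat_le_d (a s : ℝ) :
    ∫ x in a..(a + 1), F.θx x s ^ 2 / (F.v x s * F.θ x s ^ 2) ≤ F.d a s / κ := by
  have hκ := F.hκ; have hμ := F.hμ
  have h1 : ∀ x, F.v x s * F.θ x s ^ 2 ≠ 0 :=
    fun x => (mul_pos (F.v_pos x s) (pow_pos (F.θ_pos x s) 2)).ne'
  have c0 := F.cv_x s; have c1 := F.cθ_x s; have c2 := F.cθx s
  rw [d, ← intervalIntegral.integral_div]
  refine integral_le_of_continuous (by fun_prop (disch := assumption)) ((F.cD s).div_const κ)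
    (by linarith) fun x _ => ?_
  rw [le_div_iff₀ hκ]
  have := F.v_pos x s; have := F.θ_pos x s
  have : 0 ≤ μ * (F.ux x s ^ 2 / (F.v x s * F.θ x s)) := by positivity
  simp only [D]
  linarith

/-- Pointwise lower bound of the temperature by the dissipation: `log θ` has a bounded mean and
oscillates by at most `∫ |θ_x| / θ`, which is estimated by Young's inequality. -/
lemma θ_ge {a s x K α : ℝ} (hx : x ∈ Icc a (a + 1))
    (hl : -(K + 1) ≤ ∫ y in a..(a + 1), Real.log (F.θ y s))
    (hα : ∫ y in a..(a + 1), F.v y s ≤ α) :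
    Real.exp (-(K + 1) - α / 2) * Real.exp (-(F.d a s / (2 * κ))) ≤ F.θ x s := by
  have cl : Continuous fun y => Real.log (F.θ y s) :=
    (F.cθ_x s).log fun y => (F.θ_pos y s).ne'
  have h0 : ∀ y, F.θ y s ≠ 0 := fun y => (F.θ_pos y s).ne'
  have h1 : ∀ x, F.v x s * F.θ x s ^ 2 ≠ 0 :=
    fun x => (mul_pos (F.v_pos x s) (pow_pos (F.θ_pos x s) 2)).ne'
  have c0 := F.cv_x s; have c1 := F.cθ_x s; have c2 := F.cθx s
  have hlx : ∀ y, HasDerivAt (fun y => Real.log (F.θ y s)) (F.θx y s / F.θ y s) y :=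
    fun y => (F.hθ y s).log (h0 y)
  have cq : Continuous fun y => F.θx y s / F.θ y s := by fun_prop (disch := assumption)
  have ch : Continuous fun y => F.θx y s ^ 2 / (F.v y s * F.θ y s ^ 2) := by
    fun_prop (disch := assumption)
  have hI : ∫ y in a..(a + 1), |F.θx y s / F.θ y s| ≤ F.d a s / (2 * κ) + α / 2 := by
    have : ∫ y in a..(a + 1), |F.θx y s / F.θ y s| ≤
        ∫ y in a..(a + 1), (F.θx y s ^ 2 / (F.v y s * F.θ y s ^ 2) / 2 + F.v y s / 2) := by
      refine integral_le_of_continuous cq.abs (by fun_prop) (by linarith) fun y _ => ?_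
      have hv := F.v_pos y s; have hθ := F.θ_pos y s
      set z := F.θx y s / F.θ y s with hz
      have e : F.θx y s ^ 2 / (F.v y s * F.θ y s ^ 2) = z ^ 2 / F.v y s := by
        rw [hz]; field_simp
      have e1 : z ^ 2 / F.v y s + F.v y s - 2 * |z| = (|z| - F.v y s) ^ 2 / F.v y s := by
        rw [← sq_abs z]; field_simp; ring
      have e2 : 0 ≤ (|z| - F.v y s) ^ 2 / F.v y s := by positivity
      rw [e]; linarith
    rw [intervalIntegral.integral_add (Continuous.intervalIntegrable (by fun_prop) _ _)
      (Continuous.intervalIntegrable (by fun_prop) _ _), intervalIntegral.integral_div,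
      intervalIntegral.integral_div] at this
    have h2 := F.heat_le_d a s
    have e : F.d a s / (2 * κ) = F.d a s / κ / 2 := by rw [div_div, mul_comm]
    rw [e]; linarith
  have h3 := integral_unit_le (a := a) (c := Real.log (F.θ x s) +
      ∫ y in a..(a + 1), |F.θx y s / F.θ y s|) cl fun y hy => by
    have := (abs_le.1 (abs_sub_le_integral_abs_deriv hlx cq hx hy)).2
    linarith
  rw [← Real.exp_add, ← Real.exp_log (F.θ_pos x s), Real.exp_le_exp]
  linarith

/-- Pointwise upper bound of the temperature by the dissipation, given a bound `S` of the volume.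
The oscillation `∫ |θ_x|` is split by Young's inequality so that half the maximum of `θ` is
absorbed. -/
lemma θ_le {a s x α S : ℝ} (hx : x ∈ Icc a (a + 1)) (hα0 : 0 < α) (hS : 0 < S)
    (hα : ∫ y in a..(a + 1), F.θ y s ≤ α) (hv : ∀ y ∈ Icc a (a + 1), F.v y s ≤ S) :
    F.θ x s ≤ 2 * α + S * α * (F.d a s / κ) := by
  have h1 : ∀ x, F.v x s * F.θ x s ^ 2 ≠ 0 :=
    fun x => (mul_pos (F.v_pos x s) (pow_pos (F.θ_pos x s) 2)).ne'
  have c0 := F.cv_x s; have c1 := F.cθ_x s; have c2 := F.cθx s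
  have ch : Continuous fun y => F.θx y s ^ 2 / (F.v y s * F.θ y s ^ 2) := by
    fun_prop (disch := assumption)
  obtain ⟨z, hz, hzm⟩ := (isCompact_Icc (a := a) (b := a + 1)).exists_isMaxOn ⟨x, hx⟩
    c1.continuousOn
  have hzp := F.θ_pos z s
  have hmax : ∀ y ∈ Icc a (a + 1), F.θ y s ≤ F.θ z s := fun y hy => hzm hy
  have hI : ∫ y in a..(a + 1), |F.θx y s| ≤
      S * α * (F.d a s / κ) / 2 + F.θ z s / 2 := by
    have : ∫ y in a..(a + 1), |F.θx y s| ≤ ∫ y in a..(a + 1),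
        (S * α / 2 * (F.θx y s ^ 2 / (F.v y s * F.θ y s ^ 2)) +
          F.θ z s / (2 * α) * F.θ y s) := by
      refine integral_le_of_continuous c2.abs (by fun_prop) (by linarith) fun y hy => ?_
      have hvp := F.v_pos y s; have hθ := F.θ_pos y s
      have b1 := hv y hy; have b2 := hmax y hy
      have b3 : F.v y s * F.θ y s ^ 2 ≤ S * (F.θ z s * F.θ y s) := by
        rw [pow_two]; gcongr
      have e1 : S * α / 2 * (F.θx y s ^ 2 / (F.v y s * F.θ y s ^ 2)) +
          (F.v y s * F.θ y s ^ 2) / (2 * (S * α)) - |F.θx y s| =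
          (S * α * |F.θx y s| - F.v y s * F.θ y s ^ 2) ^ 2 /
            (2 * (S * α) * (F.v y s * F.θ y s ^ 2)) := by
        rw [← sq_abs (F.θx y s)]; field_simp; ring
      have e2 : 0 ≤ (S * α * |F.θx y s| - F.v y s * F.θ y s ^ 2) ^ 2 /
            (2 * (S * α) * (F.v y s * F.θ y s ^ 2)) := by positivity
      have e3 : (F.v y s * F.θ y s ^ 2) / (2 * (S * α)) ≤ F.θ z s / (2 * α) * F.θ y s := by
        calc _ ≤ S * (F.θ z s * F.θ y s) / (2 * (S * α)) := by gcongr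
          _ = _ := by field_simp
      linarith
    rw [intervalIntegral.integral_add (Continuous.intervalIntegrable (by fun_prop) _ _)
      (Continuous.intervalIntegrable (by fun_prop) _ _), intervalIntegral.integral_const_mul,
      intervalIntegral.integral_const_mul] at this
    have h2 := mul_le_mul_of_nonneg_left (F.heat_le_d a s) (by positivity : 0 ≤ S * α / 2)
    have h3 := mul_le_mul_of_nonneg_left hα (by positivity : 0 ≤ F.θ z s / (2 * α))
    have e : F.θ z s / (2 * α) * α = F.θ z s / 2 := by field_simp
    linarith
  have h3 := le_integral_unit (a := a) (c := F.θ z s - ∫ y in a..(a + 1), |F.θx y s|) c1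
    fun y hy => by
      have := (abs_le.1 (abs_sub_le_integral_abs_deriv (fun y => F.hθ y s) c2 hy hz)).2
      linarith
  have := hmax x hx
  linarith

/-- The mean stress is strictly negative up to the dissipation: the part `μ u_x / v` is absorbed by
the dissipation and half of the pressure, and the other half of the pressure has a positive mean
when `d` is small. -/
lemma stress_le {a s k α : ℝ} (hk : 0 < k) (hα0 : 0 < α) (hα : ∫ y in a..(a + 1), F.v y s ≤ α)
    (hθ : ∀ x ∈ Icc a (a + 1), k * Real.exp (-(F.d a s / (2 * κ))) ≤ F.θ x s) :
    ∫ x in a..(a + 1), F.σ x s ≤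
      (μ / (2 * R) + R * k / (4 * α * κ)) * F.d a s - R * k / (2 * α) := by
  have hμ := F.hμ; have hκ := F.hκ; have hR := F.hR
  have hd := F.d_nonneg a s
  set θm := k * (1 - F.d a s / (2 * κ)) with hθm
  have hexp : θm ≤ k * Real.exp (-(F.d a s / (2 * κ))) := by
    have := Real.add_one_le_exp (-(F.d a s / (2 * κ)))
    rw [hθm]; gcongr; linarith
  have c0 := F.cv_x s
  have ci : Continuous fun x => (F.v x s)⁻¹ := c0.inv₀ fun x => (F.v_pos x s).ne'
  have cD := F.cD s
  have h1 : ∫ x in a..(a + 1), F.σ x s ≤ ∫ x in a..(a + 1), (μ / (2 * R) * F.D x s -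
      R / 2 * (k * Real.exp (-(F.d a s / (2 * κ)))) * (F.v x s)⁻¹) := by
    refine integral_le_of_continuous (F.cσ s) (by fun_prop) (by linarith) fun x hx => ?_
    have hv := F.v_pos x s; have hθp := F.θ_pos x s
    have q1 : k * Real.exp (-(F.d a s / (2 * κ))) * (F.v x s)⁻¹ ≤ F.θ x s * (F.v x s)⁻¹ :=
      mul_le_mul_of_nonneg_right (hθ x hx) (inv_pos.2 hv).le
    have q2 : μ * (F.ux x s ^ 2 / (F.v x s * F.θ x s)) ≤ F.D x s := by
      have : 0 ≤ κ * (F.θx x s ^ 2 / (F.v x s * F.θ x s ^ 2)) := by positivity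
      simp only [D]; linarith
    have q3 : μ / (2 * R) * (μ * (F.ux x s ^ 2 / (F.v x s * F.θ x s))) - R / 2 *
        (F.θ x s * (F.v x s)⁻¹) - F.σ x s =
        (μ * F.ux x s - R * F.θ x s) ^ 2 / (2 * R * (F.v x s * F.θ x s)) := by
      simp only [σ]; field_simp; ring
    have q4 : 0 ≤ (μ * F.ux x s - R * F.θ x s) ^ 2 / (2 * R * (F.v x s * F.θ x s)) := by
      positivity
    have q5 := mul_le_mul_of_nonneg_left q2 (by positivity : 0 ≤ μ / (2 * R))
    have q6 := mul_le_mul_of_nonneg_left q1 (by positivity : 0 ≤ R / 2)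
    rw [← mul_assoc] at q6
    linarith
  rw [intervalIntegral.integral_sub (Continuous.intervalIntegrable (by fun_prop) _ _)
    (Continuous.intervalIntegrable (by fun_prop) _ _), intervalIntegral.integral_const_mul,
    intervalIntegral.integral_const_mul] at h1
  have h2 := integral_inv_ge c0 (fun x => F.v_pos x s) hα0 hα
  have h3 : R / 2 * (k * Real.exp (-(F.d a s / (2 * κ)))) * (1 / α) ≤
      R / 2 * (k * Real.exp (-(F.d a s / (2 * κ)))) * ∫ x in a..(a + 1), (F.v x s)⁻¹ := by
    gcongr
  have h4 : R / 2 * θm * (1 / α) ≤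
      R / 2 * (k * Real.exp (-(F.d a s / (2 * κ)))) * (1 / α) := by gcongr
  have h5 : R / 2 * θm * (1 / α) = R * k / (2 * α) - R * k / (4 * α * κ) * F.d a s := by
    rw [hθm]; field_simp; ring
  have h6 : ∫ x in a..(a + 1), F.D x s = F.d a s := rfl
  rw [h6] at h1
  linarith

end NSFlow

/-- All fixed-time estimates in a unit window, with constants depending on the data only. -/
lemma exists_window {μ κ R cv M m : ℝ} (hμ : 0 < μ) (hκ : 0 < κ) (hR : 0 < R) (hcv : 0 < cv)
    (hm : 0 < m) : ∃ α k A c : ℝ, 0 < α ∧ 0 < k ∧ 0 < A ∧ 0 < c ∧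
    ∀ (F : NSFlow μ κ R cv M m) (a s : ℝ), 0 ≤ s →
      ∫ x in a..(a + 1), F.θ x s ≤ α ∧ k ≤ ∫ x in a..(a + 1), F.v x s ∧
      (∀ x ∈ Icc a (a + 1), k * Real.exp (-(F.d a s / (2 * κ))) ≤ F.θ x s) ∧
      (∀ S, 0 < S → (∀ y ∈ Icc a (a + 1), F.v y s ≤ S) → ∀ x ∈ Icc a (a + 1),
        F.θ x s ≤ 2 * α + S * α * (F.d a s / κ)) ∧
      ∫ x in a..(a + 1), F.σ x s ≤ A * F.d a s - c := by
  have hE : 0 ≤ E0 R cv M m := by unfold E0; positivity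
  set K := E0 R cv M m / R + E0 R cv M m / cv with hK
  have k1 : 0 ≤ E0 R cv M m / R := by positivity
  have k2 : 0 ≤ E0 R cv M m / cv := by positivity
  set α := 2 * K + 2 with hα
  have hα0 : 0 < α := by linarith
  set k := Real.exp (-(K + 1) - α / 2) with hk
  have hk0 : 0 < k := Real.exp_pos _
  refine ⟨α, k, μ / (2 * R) + R * k / (4 * α * κ), R * k / (2 * α), hα0, hk0, by positivity,
    by positivity, fun F a s hs => ?_⟩
  obtain ⟨v1, -, v3⟩ := entropy_window (F.cv_x s) (fun x => F.v_pos x s)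
    ((F.ent_window_v a hs).trans (by linarith : _ ≤ K))
  obtain ⟨t1, t2, -⟩ := entropy_window (F.cθ_x s) (fun x => F.θ_pos x s)
    ((F.ent_window_θ a hs).trans (by linarith : _ ≤ K))
  have hge : ∀ x ∈ Icc a (a + 1), k * Real.exp (-(F.d a s / (2 * κ))) ≤ F.θ x s :=
    fun x hx => F.θ_ge hx t2 v1
  exact ⟨t1, (Real.exp_le_exp.2 (by linarith)).trans v3, hge,
    fun S hS hv x hx => F.θ_le hx hα0 hS t1 hv, F.stress_le hk0 hα0 v1 hge⟩

/-! ### Decay of the propagator and the uniform bounds -/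

/-- Gronwall's inequality with an integrable kernel `d`. The exponential is replaced by a power of
`2`, obtained by cutting `[0, t]` into pieces on which `b * ∫ d ≤ 1 / 2`. -/
lemma gronwall_kernel {W d : ℝ → ℝ} {p b T : ℝ} {n : ℕ} (hW : Continuous W)
    (hd : ∀ s, 0 ≤ d s) (hi : IntervalIntegrable d volume 0 T)
    (hb : 0 < b) (h : ∀ t ∈ Icc 0 T, W t ≤ p + b * ∫ s in (0 : ℝ)..t, W s * d s)
    (hp : 0 ≤ p) (hW0 : ∀ t, 0 ≤ W t) :
    ∀ t ∈ Icc 0 T, ∫ s in (0 : ℝ)..t, d s ≤ n / (2 * b) → W t ≤ 2 ^ n * p := by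
  have ii : ∀ s t, s ∈ Icc 0 T → t ∈ Icc 0 T → IntervalIntegrable d volume s t :=
    fun s t hs ht => hi.mono_set (by
      rw [uIcc_of_le (hs.1.trans hs.2)]
      exact uIcc_subset_Icc hs ht)
  have iW : ∀ s t, s ∈ Icc 0 T → t ∈ Icc 0 T →
      IntervalIntegrable (fun s => W s * d s) volume s t :=
    fun s t hs ht => (ii s t hs ht).continuousOn_mul hW.continuousOn
  set G : ℝ → ℝ := fun t => p + b * ∫ s in (0 : ℝ)..t, W s * d s with hG
  have key : ∀ s t, s ∈ Icc 0 T → t ∈ Icc 0 T → s ≤ t →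
      G t ≤ G s + b * (G t * ∫ τ in s..t, d τ) := by
    intro s t hs ht hst
    have h0 : (0 : ℝ) ∈ Icc 0 T := ⟨le_rfl, hs.1.trans hs.2⟩
    have e : ∀ r, r ∈ Icc 0 T → r ≤ t → (∫ τ in (0 : ℝ)..t, W τ * d τ) =
        (∫ τ in (0 : ℝ)..r, W τ * d τ) + ∫ τ in r..t, W τ * d τ := fun r hr _ =>
      (intervalIntegral.integral_add_adjacent_intervals (iW _ _ h0 hr) (iW _ _ hr ht)).symm
    have h1 : ∫ τ in s..t, W τ * d τ ≤ ∫ τ in s..t, G t * d τ := by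
      refine intervalIntegral.integral_mono_on hst (iW _ _ hs ht) ((ii _ _ hs ht).const_mul _)
        fun τ hτ => ?_
      have hτ' : τ ∈ Icc 0 T := ⟨hs.1.trans hτ.1, hτ.2.trans ht.2⟩
      refine mul_le_mul_of_nonneg_right ((h τ hτ').trans ?_) (hd τ)
      have := e τ hτ' hτ.2
      have h2 : 0 ≤ ∫ r in τ..t, W r * d r :=
        intervalIntegral.integral_nonneg hτ.2 fun r _ => mul_nonneg (hW0 r) (hd r)
      simp only [hG]
      rw [this]
      nlinarith
    rw [intervalIntegral.integral_const_mul] at h1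
    have h3 := e s hs hst
    have h4 := mul_le_mul_of_nonneg_left h1 hb.le
    have h5 : G t = G s + b * ∫ τ in s..t, W τ * d τ := by
      simp only [hG]; rw [h3]; ring
    linarith
  suffices ∀ t ∈ Icc 0 T, ∫ s in (0 : ℝ)..t, d s ≤ n / (2 * b) → G t ≤ 2 ^ n * p from
    fun t ht hn => (h t ht).trans (this t ht hn)
  have Gnn : ∀ t ∈ Icc 0 T, 0 ≤ G t := fun t ht => (hW0 t).trans (h t ht)
  have G0 : G 0 = p := by simp [hG]
  induction n with
  | zero =>
    intro t ht hn
    have h0 : (0 : ℝ) ∈ Icc 0 T := ⟨le_rfl, ht.1.trans ht.2⟩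
    have h1 := key 0 t h0 ht ht.1
    have h2 : 0 ≤ ∫ s in (0 : ℝ)..t, d s := intervalIntegral.integral_nonneg ht.1 fun r _ => hd r
    have h3 : ∫ s in (0 : ℝ)..t, d s = 0 := le_antisymm (by simpa using hn) h2
    rw [h3, G0] at h1
    simpa using h1
  | succ n ih =>
    intro t ht hn
    have h0 : (0 : ℝ) ∈ Icc 0 T := ⟨le_rfl, ht.1.trans ht.2⟩
    by_cases hc : ∫ s in (0 : ℝ)..t, d s ≤ n / (2 * b)
    · have := ih t ht hc
      have h2 : (0 : ℝ) ≤ 2 ^ n * p := by positivity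
      rw [pow_succ]; linarith
    · push Not at hc
      have cΦ : ContinuousOn (fun r => ∫ s in (0 : ℝ)..r, d s) (Icc 0 t) := by
        have := intervalIntegral.continuousOn_primitive_interval'
          (ii 0 t h0 ht) (left_mem_uIcc)
        rwa [uIcc_of_le ht.1] at this
      obtain ⟨s, hs, hse⟩ := intermediate_value_Icc ht.1 cΦ
        (show (n : ℝ) / (2 * b) ∈ Icc _ _ from
          ⟨by simp only [intervalIntegral.integral_same]; positivity, hc.le⟩)
      have hs' : s ∈ Icc 0 T := ⟨hs.1, hs.2.trans ht.2⟩
      have h1 := ih s hs' hse.le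
      have h2 := key s t hs' ht hs.2
      have h3 := intervalIntegral.integral_add_adjacent_intervals (ii _ _ h0 hs') (ii _ _ hs' ht)
      simp only at hse
      have h4 : ∫ τ in s..t, d τ ≤ 1 / (2 * b) := by
        have : ((n + 1 : ℕ) : ℝ) / (2 * b) = n / (2 * b) + 1 / (2 * b) := by push_cast; ring
        linarith
      have h5 : b * (G t * ∫ τ in s..t, d τ) ≤ G t / 2 := by
        calc b * (G t * ∫ τ in s..t, d τ) ≤ b * (G t * (1 / (2 * b))) := by
              gcongr; exact Gnn t ht
          _ = G t / 2 := by field_simp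
      rw [pow_succ]; linarith

/-- Fubini for a product of a kernel in time and a jointly continuous function. -/
lemma swap_kernel {ζ : ℝ → ℝ} {f : ℝ → ℝ → ℝ} {a b t : ℝ} (hab : a ≤ b) (ht : 0 ≤ t)
    (hζ : ContinuousOn ζ (Icc 0 t)) (hf : Continuous fun p : ℝ × ℝ => f p.1 p.2) :
    (Continuous fun x => ∫ s in (0 : ℝ)..t, ζ s * f x s) ∧
    ∫ x in a..b, ∫ s in (0 : ℝ)..t, ζ s * f x s = ∫ s in (0 : ℝ)..t, ∫ x in a..b, ζ s * f x s := by
  -- a globally continuous extension of the kernel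
  set ξ : ℝ → ℝ := fun s => ζ (max 0 (min s t)) with hξ
  have cξ : Continuous ξ := hζ.comp_continuous (by fun_prop)
    fun s => ⟨le_max_left _ _, max_le ht (min_le_right _ _)⟩
  have e : ∀ s ∈ uIcc 0 t, ζ s = ξ s := fun s hs => by
    rw [uIcc_of_le ht] at hs
    simp [hξ, min_eq_left hs.2, max_eq_right hs.1]
  have cg : Continuous (Function.uncurry fun x s => ξ s * f x s) :=
    (cξ.comp continuous_snd).mul hf
  have e1 : ∀ x, ∫ s in (0 : ℝ)..t, ζ s * f x s = ∫ s in (0 : ℝ)..t, ξ s * f x s := fun x =>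
    intervalIntegral.integral_congr fun s hs => by simp only [e s hs]
  have e2 : ∫ s in (0 : ℝ)..t, ∫ x in a..b, ζ s * f x s =
      ∫ s in (0 : ℝ)..t, ∫ x in a..b, ξ s * f x s :=
    intervalIntegral.integral_congr fun s hs => by simp only [e s hs]
  rw [e2]
  simp only [e1]
  refine ⟨intervalIntegral.continuous_parametric_intervalIntegral_of_continuous' cg _ _, ?_⟩
  simp only [intervalIntegral.integral_of_le hab, intervalIntegral.integral_of_le ht]
  refine integral_integral_swap ?_
  rw [Measure.prod_restrict]
  exact (cg.continuousOn.integrableOn_compact (isCompact_Icc.prod isCompact_Icc)).mono_set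
    (prod_mono Ioc_subset_Icc_self Ioc_subset_Icc_self)

namespace NSFlow

section

variable {μ κ R cv M m : ℝ} (F : NSFlow μ κ R cv M m)

lemma int_d (a : ℝ) {s t : ℝ} (hs : 0 ≤ s) (ht : 0 ≤ t) :
    IntervalIntegrable (F.d a) volume s t :=
  F.int_D (by linarith) hs ht

lemma integral_d_le (a : ℝ) {s t : ℝ} (hs : 0 ≤ s) (hst : s ≤ t) :
    ∫ τ in s..t, F.d a τ ≤ E0 R cv M m := by
  have hE := F.E0_nonneg
  rcases (hs.trans hst).eq_or_lt with h | ht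
  · have : s = t := by linarith
    subst this; simpa using hE
  · have h1 := F.energy (by linarith : a ≤ a + 1) ht
    have h2 : 0 ≤ ∫ x in a..(a + 1), F.η x t := intervalIntegral.integral_nonneg (by linarith)
      fun x _ => by
        have := mul_nonneg F.hR.le (ent_nonneg (F.v_pos x t))
        have := mul_nonneg F.hcv.le (ent_nonneg (F.θ_pos x t))
        simp only [η]; positivity
    have h3 := intervalIntegral.integral_add_adjacent_intervals (F.int_d a le_rfl hs)
      (F.int_d a hs ht.le)
    have h4 : 0 ≤ ∫ τ in (0 : ℝ)..s, F.d a τ :=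
      intervalIntegral.integral_nonneg hs fun τ _ => F.d_nonneg a τ
    have h5 : ∫ τ in (0 : ℝ)..t, F.d a τ = ∫ τ in (0 : ℝ)..t, ∫ x in a..(a + 1), F.D x τ := rfl
    linarith

/-- Largest value of the specific volume on `[a, a + 1]` at time `t`. -/
noncomputable def W (a t : ℝ) : ℝ := sSup ((fun x => F.v x t) '' Icc a (a + 1))

lemma cW (a : ℝ) : Continuous (F.W a) := by
  have h := F.jv
  exact isCompact_Icc.continuous_sSup (f := fun t x => F.v x t) (h.comp continuous_swap)

lemma le_W {a x : ℝ} (t : ℝ) (hx : x ∈ Icc a (a + 1)) : F.v x t ≤ F.W a t :=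
  le_csSup (isCompact_Icc.image (F.cv_x t)).bddAbove ⟨x, hx, rfl⟩

lemma W_le {a t S : ℝ} (h : ∀ x ∈ Icc a (a + 1), F.v x t ≤ S) : F.W a t ≤ S :=
  csSup_le ⟨_, a, ⟨le_rfl, by linarith⟩, rfl⟩ (by rintro _ ⟨x, hx, rfl⟩; exact h x hx)

lemma W_pos (a t : ℝ) : 0 < F.W a t :=
  (F.v_pos a t).trans_le (F.le_W t ⟨le_rfl, by linarith⟩)

lemma int_Z (a : ℝ) {t : ℝ} (ht : 0 ≤ t) : IntervalIntegrable (fun s => F.Z a s t) volume 0 t :=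
  ContinuousOn.intervalIntegrable (by rw [uIcc_of_le ht]; exact F.cZ a ht)

end

/-- The propagator is bounded, uniformly in time, both pointwise and in `L¹`: it decays
exponentially in `t - s`. -/
lemma exists_decay {μ κ R cv M m : ℝ} (hμ : 0 < μ) (hκ : 0 < κ) (hR : 0 < R) (hcv : 0 < cv)
    (hm : 0 < m) : ∃ B : ℝ, 0 < B ∧ ∀ (F : NSFlow μ κ R cv M m) (a t : ℝ), 0 ≤ t →
      (∀ s ∈ Icc 0 t, F.Z a s t ≤ B) ∧ ∫ s in (0 : ℝ)..t, F.Z a s t ≤ B := by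
  obtain ⟨α, k, A, c, hα, hk, hA, hc, H⟩ := exists_window (M := M) hμ hκ hR hcv hm
  set P := Real.exp (A * E0 R cv M m / μ) with hP
  have hP0 : 0 < P := Real.exp_pos _
  set l := c / μ with hl
  have hl0 : 0 < l := by positivity
  refine ⟨max P (P / l), lt_max_of_lt_left hP0, fun F a t ht => ?_⟩
  have hZ : ∀ s ∈ Icc 0 t, F.Z a s t ≤ P * Real.exp (-(l * (t - s))) := by
    intro s hs
    have e1 : F.Y a t - F.Y a s = ∫ τ in s..t, ∫ x in (a + 1)..(a + 2), F.σ x τ := by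
      simp only [Y]
      rw [intervalIntegral.integral_interval_sub_left]
      · exact F.int_σ' (by linarith) le_rfl ht
      · exact F.int_σ' (by linarith) le_rfl hs.1
    have e2 : F.Y a t - F.Y a s ≤ ∫ τ in s..t, (A * F.d (a + 1) τ - c) := by
      rw [e1]
      refine intervalIntegral.integral_mono_on hs.2 (F.int_σ' (by linarith) hs.1 ht)
        (((F.int_d (a + 1) hs.1 ht).const_mul A).sub intervalIntegrable_const) fun τ hτ => ?_
      have := (H F (a + 1) τ (hs.1.trans hτ.1)).2.2.2.2
      rwa [show a + 1 + 1 = a + 2 by ring] at this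
    rw [intervalIntegral.integral_sub ((F.int_d (a + 1) hs.1 ht).const_mul A)
      intervalIntegrable_const, intervalIntegral.integral_const_mul,
      intervalIntegral.integral_const, smul_eq_mul] at e2
    have e3 := mul_le_mul_of_nonneg_left (F.integral_d_le (a + 1) hs.1 hs.2) hA.le
    rw [Z, hP, ← Real.exp_add, Real.exp_le_exp, hl]
    calc (F.Y a t - F.Y a s) / μ ≤ (A * E0 R cv M m - (t - s) * c) / μ := by
          exact div_le_div_of_nonneg_right (by linarith) hμ.le
      _ = _ := by ring
  refine ⟨fun s hs => (hZ s hs).trans (le_max_of_le_left ?_), le_max_of_le_right ?_⟩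
  · refine mul_le_of_le_one_right hP0.le (Real.exp_le_one_iff.2 ?_)
    have := mul_nonneg hl0.le (sub_nonneg.2 hs.2)
    linarith
  · have h1 : ∫ s in (0 : ℝ)..t, F.Z a s t ≤ ∫ s in (0 : ℝ)..t, P * Real.exp (-(l * (t - s))) :=
      intervalIntegral.integral_mono_on ht (F.int_Z a ht)
        (Continuous.intervalIntegrable (by fun_prop) _ _) hZ
    have h2 : ∫ s in (0 : ℝ)..t, P * Real.exp (-(l * (t - s))) =
        P / l * Real.exp (-(l * (t - t))) - P / l * Real.exp (-(l * (t - 0))) := by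
      refine intervalIntegral.integral_eq_sub_of_hasDerivAt
        (f := fun s => P / l * Real.exp (-(l * (t - s)))) (fun s _ => ?_)
        (Continuous.intervalIntegrable (by fun_prop) _ _)
      have : HasDerivAt (fun s => P / l * Real.exp (-(l * (t - s))))
          (P / l * (Real.exp (-(l * (t - s))) * -(l * -1))) s :=
        (((((hasDerivAt_id s).const_sub t).const_mul l).neg).exp).const_mul (P / l)
      exact this.congr_deriv (by field_simp)
    have h3 : 0 < P / l * Real.exp (-(l * (t - 0))) := by positivity
    have h4 : P / l * Real.exp (-(l * (t - t))) = P / l := by simp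
    linarith

/-- Uniform upper bound: `v ≤ C (Z + ∫ Z θ)` with `θ ≤ 2 α + α (sup v) d / κ` and `∫ d ≤ E0`, so
Gronwall applies to the maximum of `v` on the window. -/
lemma exists_upper {μ κ R cv M m : ℝ} (hμ : 0 < μ) (hκ : 0 < κ) (hR : 0 < R) (hcv : 0 < cv)
    (hm : 0 < m) : ∃ K : ℝ, 0 < K ∧ ∀ (F : NSFlow μ κ R cv M m) (x t : ℝ), 0 ≤ t →
      F.v x t ≤ K := by
  obtain ⟨α, k, A, c, hα, hk, hA, hc, H⟩ := exists_window (M := M) hμ hκ hR hcv hm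
  obtain ⟨B, hB, HB⟩ := exists_decay (M := M) hμ hκ hR hcv hm
  obtain ⟨c', C, hc', hC, HC⟩ := exists_repr (κ := κ) (cv := cv) (M := M) hμ hR hm
  set p := C * (B + 2 * α * B) with hp
  set b := C * (B * α / κ) with hb
  have hp0 : 0 < p := by positivity
  have hb0 : 0 < b := by positivity
  obtain ⟨n, hn⟩ := exists_nat_ge (E0 R cv M m * (2 * b))
  refine ⟨2 ^ n * p, by positivity, fun F a t ht => (F.le_W t ⟨le_rfl, by linarith⟩).trans ?_⟩
  refine gronwall_kernel (F.cW a) (F.d_nonneg a) (F.int_d a le_rfl ht) hb0 (fun r hr => ?_) hp0.le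
    (fun s => (F.W_pos a s).le) t ⟨ht, le_rfl⟩
    ((F.integral_d_le a le_rfl ht).trans ((le_div_iff₀ (by positivity)).2 hn))
  refine F.W_le fun x hx => (HC F a x r hx hr.1).2.trans ?_
  obtain ⟨hZ1, hZ2⟩ := HB F a r hr.1
  have iW : IntervalIntegrable (fun s => F.W a s * F.d a s) volume 0 r :=
    (F.int_d a le_rfl hr.1).continuousOn_mul (F.cW a).continuousOn
  have h1 : ∫ s in (0 : ℝ)..r, F.Z a s r * F.θ x s ≤
      ∫ s in (0 : ℝ)..r, (2 * α * F.Z a s r + B * α / κ * (F.W a s * F.d a s)) := by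
    refine intervalIntegral.integral_mono_on hr.1 (F.int_Zθ a x hr.1)
      (((F.int_Z a hr.1).const_mul _).add (iW.const_mul _)) fun s hs => ?_
    have h2 := (H F a s hs.1).2.2.2.1 _ (F.W_pos a s) (fun y hy => F.le_W s hy) x hx
    have h3 : 0 ≤ F.W a s * α * (F.d a s / κ) :=
      mul_nonneg (mul_nonneg (F.W_pos a s).le hα.le) (div_nonneg (F.d_nonneg a s) hκ.le)
    calc F.Z a s r * F.θ x s ≤ F.Z a s r * (2 * α + F.W a s * α * (F.d a s / κ)) := by
          gcongr; exact (F.Z_pos a s r).le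
      _ = 2 * α * F.Z a s r + F.Z a s r * (F.W a s * α * (F.d a s / κ)) := by ring
      _ ≤ 2 * α * F.Z a s r + B * (F.W a s * α * (F.d a s / κ)) := by
          gcongr; exact hZ1 s hs
      _ = _ := by ring
  rw [intervalIntegral.integral_add ((F.int_Z a hr.1).const_mul _) (iW.const_mul _),
    intervalIntegral.integral_const_mul, intervalIntegral.integral_const_mul] at h1
  have h4 := hZ1 0 ⟨le_rfl, hr.1⟩
  have h5 : 2 * α * ∫ s in (0 : ℝ)..r, F.Z a s r ≤ 2 * α * B := by gcongr
  calc _ ≤ C * (B + (2 * α * B + B * α / κ * ∫ s in (0 : ℝ)..r, F.W a s * F.d a s)) := by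
        gcongr; linarith
    _ = _ := by rw [hp, hb]; ring

/-- Uniform lower bound: averaging the upper representation over the window bounds
`Z + ∫ Z` from below, and `θ` is bounded from below except where `d` is large, which happens only
on a set of times of small measure. -/
lemma exists_lower {μ κ R cv M m : ℝ} (hμ : 0 < μ) (hκ : 0 < κ) (hR : 0 < R) (hcv : 0 < cv)
    (hm : 0 < m) : ∃ K : ℝ, 0 < K ∧ ∀ (F : NSFlow μ κ R cv M m) (x t : ℝ), 0 ≤ t →
      K ≤ F.v x t := by
  obtain ⟨α, k, A, c, hα, hk, hA, hc, H⟩ := exists_window (M := M) hμ hκ hR hcv hm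
  obtain ⟨B, hB, HB⟩ := exists_decay (M := M) hμ hκ hR hcv hm
  obtain ⟨c', C, hc', hC, HC⟩ := exists_repr (κ := κ) (cv := cv) (M := M) hμ hR hm
  have hE : 0 ≤ E0 R cv M m := by unfold E0; positivity
  set q := k / (C * (1 + α)) with hq
  have hq0 : 0 < q := by positivity
  -- the level of `d` above which a time is discarded: the discarded part is at most `q / 2`
  set L := 2 * (B * E0 R cv M m + 1) / q with hL
  have hL0 : 0 < L := by positivity
  set ρ := min 1 (k * Real.exp (-(L / (2 * κ)))) with hρ
  have hρ0 : 0 < ρ := lt_min one_pos (by positivity)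
  refine ⟨c' * (ρ * (q / 2)), by positivity, fun F a t ht => ?_⟩
  obtain ⟨hZ1, hZ2⟩ := HB F a t ht
  have hZ0 := F.Z_pos a 0 t
  have hab : a ≤ a + 1 := by linarith
  have cθ := F.jθ
  -- lower bound of the propagator mass, by averaging
  have h1 : q ≤ F.Z a 0 t + ∫ s in (0 : ℝ)..t, F.Z a s t := by
    obtain ⟨cI, sw⟩ := swap_kernel hab ht (F.cZ a ht) cθ
    have iI := cI.intervalIntegrable (μ := volume) a (a + 1)
    have g1 : ∫ x in a..(a + 1), F.v x t ≤
        ∫ x in a..(a + 1), C * (F.Z a 0 t + ∫ s in (0 : ℝ)..t, F.Z a s t * F.θ x s) :=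
      intervalIntegral.integral_mono_on hab ((F.cv_x t).intervalIntegrable _ _)
        ((intervalIntegrable_const.add iI).const_mul C) fun x hx => (HC F a x t hx ht).2
    rw [intervalIntegral.integral_const_mul, intervalIntegral.integral_add
      intervalIntegrable_const iI, intervalIntegral.integral_const, sw] at g1
    simp only [add_sub_cancel_left, one_smul, intervalIntegral.integral_const_mul] at g1
    have g2 : ∫ s in (0 : ℝ)..t, F.Z a s t * ∫ x in a..(a + 1), F.θ x s ≤
        ∫ s in (0 : ℝ)..t, F.Z a s t * α := by
      refine intervalIntegral.integral_mono_on ht ?_ ((F.int_Z a ht).mul_const _) fun s hs =>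
        mul_le_mul_of_nonneg_left (H F a s hs.1).1 (F.Z_pos a s t).le
      refine (F.int_Z a ht).mul_continuousOn (Continuous.continuousOn ?_)
      exact intervalIntegral.continuous_parametric_intervalIntegral_of_continuous'
        (f := fun s x => F.θ x s) (cθ.comp continuous_swap) _ _
    rw [intervalIntegral.integral_mul_const] at g2
    have g3 := (H F a t ht).2.1
    have g4 : 0 ≤ ∫ s in (0 : ℝ)..t, F.Z a s t :=
      intervalIntegral.integral_nonneg ht fun s _ => (F.Z_pos a s t).le
    rw [hq, div_le_iff₀ (by positivity)]
    have g5 := mul_le_mul_of_nonneg_left g2 hC.le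
    have g6 := mul_nonneg hC.le g4
    have g7 := mul_nonneg (mul_nonneg hC.le hα.le) hZ0.le
    nlinarith
  have h2 : ∫ s in (0 : ℝ)..t, ρ * (F.Z a s t - B / L * F.d a s) ≤
      ∫ s in (0 : ℝ)..t, F.Z a s t * F.θ a s := by
    refine intervalIntegral.integral_mono_on ht
      (((F.int_Z a ht).sub ((F.int_d a le_rfl ht).const_mul _)).const_mul _) (F.int_Zθ a a ht)
      fun s hs => ?_
    have hZ := F.Z_pos a s t
    have hd := F.d_nonneg a s
    by_cases hds : F.d a s ≤ L
    · have g1 : ρ ≤ F.θ a s := by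
        refine (min_le_right _ _).trans (le_trans ?_
          ((H F a s hs.1).2.2.1 a ⟨le_rfl, by linarith⟩))
        gcongr
      calc ρ * (F.Z a s t - B / L * F.d a s) ≤ ρ * F.Z a s t := by
            gcongr; linarith [show 0 ≤ B / L * F.d a s by positivity]
        _ ≤ F.θ a s * F.Z a s t := by gcongr
        _ = _ := mul_comm _ _
    · push Not at hds
      have g1 : B ≤ B / L * F.d a s := by
        rw [div_mul_eq_mul_div, le_div_iff₀ hL0]; gcongr
      have g2 := hZ1 s hs
      exact (mul_nonpos_of_nonneg_of_nonpos hρ0.le (by linarith)).trans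
        (mul_nonneg hZ.le (F.θ_pos a s).le)
  rw [intervalIntegral.integral_const_mul, intervalIntegral.integral_sub (F.int_Z a ht)
    ((F.int_d a le_rfl ht).const_mul _), intervalIntegral.integral_const_mul] at h2
  have h3 : B / L * ∫ s in (0 : ℝ)..t, F.d a s ≤ q / 2 := by
    calc B / L * ∫ s in (0 : ℝ)..t, F.d a s ≤ B / L * E0 R cv M m := by
          gcongr; exact F.integral_d_le a le_rfl ht
      _ ≤ q / 2 := by
          rw [hL, div_mul_eq_mul_div, div_le_iff₀ (by positivity)]
          have : q / 2 * (2 * (B * E0 R cv M m + 1) / q) = B * E0 R cv M m + 1 := by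
            field_simp
          linarith
  refine le_trans ?_ (HC F a a t ⟨le_rfl, by linarith⟩ ht).1
  gcongr
  have h4 : ρ * F.Z a 0 t ≤ F.Z a 0 t := mul_le_of_le_one_left hZ0.le (min_le_left _ _)
  have h5 : ρ * (q / 2) ≤ ρ * (F.Z a 0 t + ((∫ s in (0 : ℝ)..t, F.Z a s t) -
      B / L * ∫ s in (0 : ℝ)..t, F.d a s)) := by gcongr; linarith
  linarith

end NSFlow

/-- Jiang's uniform bounds on the specific volume. -/
theorem volume_uniform_bounds
    (μ κ R cv M m : ℝ) (hμ : 0 < μ) (hκ : 0 < κ) (hR : 0 < R) (hcv : 0 < cv)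
    (hM : 0 < M) (hm : 0 < m) :
    ∃ C₁ : ℝ, 0 < C₁ ∧
      ∀ v u θ : ℝ → ℝ → ℝ,
        IsClassicalSolution μ κ R cv v u θ →
        InitBounded M m v u θ →
        ∀ x t : ℝ, 0 ≤ t → C₁⁻¹ ≤ v x t ∧ v x t ≤ C₁ := by
  obtain ⟨K, hK, HK⟩ := NSFlow.exists_upper (M := M) hμ hκ hR hcv hm
  obtain ⟨k, hk, Hk⟩ := NSFlow.exists_lower (M := M) hμ hκ hR hcv hm
  refine ⟨max K k⁻¹, lt_max_of_lt_left hK, fun v u θ h h0 x t ht => ?_⟩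
  obtain ⟨F, hF⟩ := exists_flow hμ hκ hR hcv hm h h0
  have e : F.v x t = v x t := by rw [hF]; simp [max_eq_left ht]
  rw [← e]
  refine ⟨le_trans ?_ (Hk F x t ht), (HK F x t ht).trans (le_max_left _ _)⟩
  exact inv_le_of_inv_le₀ hk (le_max_right _ _)
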